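/- arXiv:1210.6917 — 4 statements merged into one kernel-verified Lean document; each statement's English description precedes it below -/
import Mathlib

section
/- Let K ≥ 1 and let A be a nonempty subset of F_2^n satisfying |A + A| ≤ K·|A|. Then for every real ε > 0, every positive integer t, and every set B ⊆ F_2^n there exists a set X ⊆ F_2^n with the following properties: (1) X is contained in an affine shift of A, i.e. there exists c ∈ F_2^n with X ⊆ c + A; (2) |X| ≥ |A|/(2·K^{t−1}); (3) for every x ∈ X and every nonempty subset S ⊆ F_2^n, Pr_{y∈S}[ |ρ_{A→B}(y) − ρ_{A→B}(y + x)| ≤ 2ε ] ≥ 1 − 8·(|A+B|/|S|)·exp(−2ε²t). -/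
open scoped Classical Pointwise

/-- The measure of additive containment: `ρ_{A→B}(y) = |{a ∈ A : y + a ∈ B}| / |A|`. -/
noncomputable def rhoMeas {n : ℕ} (A B : Finset (Fin n → ZMod 2)) (y : Fin n → ZMod 2) : ℝ :=
  ((A.filter fun a => y + a ∈ B).card : ℝ) / A.card

/-- `Pr_{y ∈ S}[P y] = |{y ∈ S : P y}| / |S|`. -/
noncomputable def prOver {n : ℕ} (S : Finset (Fin n → ZMod 2))
    (P : (Fin n → ZMod 2) → Prop) : ℝ :=
  ((S.filter fun y => P y).card : ℝ) / S.card

/-!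
Estimate `ρ_{A→B}` by sampling: for a tuple `g` of `t` elements of `A`, the fraction of indices `i`
with `y + g i ∈ B` is, by Hoeffding's inequality, within `ε` of `ρ_{A→B}(y)` for most `g`. Averaging
over `g ∈ A ^ t`, Markov's inequality makes at least half of the tuples wrong at no more than
`4 |B - A| exp(-2 ε² t)` points. The differences `-g 0 + g j` lie in `-A + A`, so small doubling
leaves at most `(K |A|) ^ (t - 1)` possibilities for them, and by pigeonhole many good tuples are
left translates `x + g` of a single one. For such an `x`, the estimate from `g` at `y + x` coincides
with the estimate from `x + g` at `y`, and comparing both with the true values shows that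
`ρ_{A→B}(y)` and `ρ_{A→B}(y + x)` are `2 ε`-close outside the two sets of wrong points.
-/

open Finset MeasureTheory ProbabilityTheory
open scoped BigOperators

section Sampling

variable {α ι : Type*} [Fintype ι]

lemma integral_uniformOn_finset [MeasurableSpace α] [MeasurableSingletonClass α] (s : Finset α)
    (f : α → ℝ) : ∫ a, f a ∂uniformOn (s : Set α) = 𝔼 a ∈ s, f a := by
  have hf : IntegrableOn f s Measure.count := by
    rw [← (s : Set α).biUnion_of_singleton]
    simp [integrableOn_finset_iUnion]
  rw [uniformOn, ProbabilityTheory.cond, integral_smul_measure, setIntegral_finset s hf,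
    expect_eq_sum_div_card]
  simp [div_eq_inv_mul]

lemma pi_uniformOn_real_finset [DecidableEq ι] [MeasurableSpace α] [MeasurableSingletonClass α]
    {s : Finset α} {E : Finset (ι → α)} (hE : E ⊆ Fintype.piFinset fun _ ↦ s) :
    (Measure.pi fun _ : ι ↦ uniformOn (s : Set α)).real E = #E / #s ^ Fintype.card ι := by
  have hpoint : ∀ g ∈ E, (Measure.pi fun _ : ι ↦ uniformOn (s : Set α)).real {g}
      = ((#s : ℝ) ^ Fintype.card ι)⁻¹ := by
    intro g hg
    have hgs : ∀ i, uniformOn (s : Set α) {g i} = (#s : ENNReal)⁻¹ := fun i ↦ by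
      rw [← coe_singleton, uniformOn_apply_finset,
        inter_singleton_of_mem (Fintype.mem_piFinset.1 (hE hg) i)]
      simp
    simp [measureReal_def, hgs]
  rw [← sum_measureReal_singleton, sum_congr rfl hpoint, sum_const, nsmul_eq_mul, div_eq_mul_inv]

lemma hasSubgaussianMGF_sum_pi_uniformOn [MeasurableSpace α] [DiscreteMeasurableSpace α]
    {s : Finset α} (hs : s.Nonempty) {f : α → ℝ} {a b : ℝ} (hf : ∀ x ∈ s, f x ∈ Set.Icc a b) :
    HasSubgaussianMGF (fun g : ι → α ↦ ∑ i, (f (g i) - 𝔼 x ∈ s, f x))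
      (Fintype.card ι * (‖b - a‖₊ / 2) ^ 2) (Measure.pi fun _ : ι ↦ uniformOn (s : Set α)) := by
  have : IsProbabilityMeasure (uniformOn (s : Set α)) :=
    isProbabilityMeasure_uniformOn s.finite_toSet hs
  have hone : HasSubgaussianMGF (fun x ↦ f x - 𝔼 x ∈ s, f x) ((‖b - a‖₊ / 2) ^ 2)
      (uniformOn (s : Set α)) := by
    rw [← integral_uniformOn_finset]
    refine hasSubgaussianMGF_of_mem_Icc Measurable.of_discrete.aemeasurable ?_
    filter_upwards [ae_cond_mem s.measurableSet] with x hx using hf x hx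
  have hcoord (i : ι) : HasSubgaussianMGF (fun g : ι → α ↦ f (g i) - 𝔼 x ∈ s, f x)
      ((‖b - a‖₊ / 2) ^ 2) (Measure.pi fun _ : ι ↦ uniformOn (s : Set α)) := by
    refine .of_map (measurable_pi_apply i).aemeasurable (X := fun x ↦ f x - 𝔼 x ∈ s, f x) ?_
    rwa [(measurePreserving_eval _ i).map_eq]
  have hindep : iIndepFun (fun i (g : ι → α) ↦ f (g i) - 𝔼 x ∈ s, f x)
      (Measure.pi fun _ : ι ↦ uniformOn (s : Set α)) :=
    iIndepFun_pi (X := fun _ x ↦ f x - 𝔼 x ∈ s, f x)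
      fun _ ↦ Measurable.of_discrete.aemeasurable
  have hsum := HasSubgaussianMGF.sum_of_iIndepFun hindep (s := univ) fun i _ ↦ hcoord i
  rwa [sum_const, nsmul_eq_mul, card_univ] at hsum

lemma measureReal_abs_ge_le_of_hasSubgaussianMGF {Ω : Type*} [MeasurableSpace Ω]
    {μ : Measure Ω} {X : Ω → ℝ} {c : NNReal} (h : HasSubgaussianMGF X c μ) {r : ℝ} (hr : 0 ≤ r) :
    μ.real {ω | r ≤ |X ω|} ≤ 2 * Real.exp (-r ^ 2 / (2 * c)) := by
  have hcover : {ω | r ≤ |X ω|} = {ω | r ≤ X ω} ∪ {ω | r ≤ (-X) ω} := by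
    ext ω
    simp [le_abs]
  calc μ.real {ω | r ≤ |X ω|} ≤ μ.real {ω | r ≤ X ω} + μ.real {ω | r ≤ (-X) ω} :=
        hcover ▸ measureReal_union_le _ _
    _ ≤ 2 * Real.exp (-r ^ 2 / (2 * c)) := by
        linarith [h.measure_ge_le hr, h.neg.measure_ge_le hr]

theorem card_filter_lt_abs_expect_sub_expect_le [DecidableEq ι] {s : Finset α}
    (hs : s.Nonempty) {f : α → ℝ} {a b : ℝ} (hf : ∀ x ∈ s, f x ∈ Set.Icc a b) {ε : ℝ} (hε : 0 ≤ ε) :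
    (#{g ∈ Fintype.piFinset fun _ : ι ↦ s | ε < |𝔼 i, f (g i) - 𝔼 x ∈ s, f x|} : ℝ) ≤
      2 * Real.exp (-2 * ε ^ 2 * Fintype.card ι / (b - a) ^ 2) * #s ^ Fintype.card ι := by
  let _ : MeasurableSpace α := ⊤
  have : IsProbabilityMeasure (uniformOn (s : Set α)) :=
    isProbabilityMeasure_uniformOn s.finite_toSet hs
  set N : ℝ := (Fintype.card ι : ℝ)
  have hN : 0 ≤ N := Nat.cast_nonneg _
  have hsum (g : ι → α) :
      ∑ i, (f (g i) - 𝔼 x ∈ s, f x) = N * (𝔼 i, f (g i) - 𝔼 x ∈ s, f x) := by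
    rw [sum_sub_distrib, mul_sub, Fintype.card_mul_expect, sum_const, nsmul_eq_mul, card_univ]
  have hexponent : -(N * ε) ^ 2 / (2 * (N * (|b - a| / 2) ^ 2)) = -2 * ε ^ 2 * N / (b - a) ^ 2 := by
    obtain hN | hN := eq_or_ne N 0
    · simp [hN]
    · rw [div_pow, sq_abs]
      field_simp
  rw [← div_le_iff₀ (by have := hs.card_pos; positivity),
    ← pi_uniformOn_real_finset (filter_subset _ _), ← hexponent]
  calc (Measure.pi fun _ : ι ↦ uniformOn (s : Set α)).real
        ↑({g ∈ Fintype.piFinset fun _ : ι ↦ s | ε < |𝔼 i, f (g i) - 𝔼 x ∈ s, f x|})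
      ≤ (Measure.pi fun _ : ι ↦ uniformOn (s : Set α)).real
          {g | N * ε ≤ |∑ i, (f (g i) - 𝔼 x ∈ s, f x)|} := by
        refine measureReal_mono fun g hg ↦ ?_
        rw [Set.mem_ofPred_eq, hsum, abs_mul, abs_of_nonneg hN]
        exact mul_le_mul_of_nonneg_left (mem_filter.1 hg).2.le hN
    _ ≤ _ := by
        simpa using measureReal_abs_ge_le_of_hasSubgaussianMGF
          (hasSubgaussianMGF_sum_pi_uniformOn hs hf) (mul_nonneg hN hε)

end Sampling

lemma half_card_le_card_filter_le_two_mul {α : Type*} {s : Finset α} {f : α → ℝ} {M : ℝ}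
    (hf : ∀ x ∈ s, 0 ≤ f x) (hsum : ∑ x ∈ s, f x ≤ #s * M) :
    (#s : ℝ) / 2 ≤ #{x ∈ s | f x ≤ 2 * M} := by
  by_contra! hfew
  have hsplit : (#{x ∈ s | f x ≤ 2 * M} : ℝ) + #{x ∈ s | ¬f x ≤ 2 * M} = #s := by
    exact_mod_cast card_filter_add_card_filter_not (s := s) (f · ≤ 2 * M)
  have hne : {x ∈ s | ¬f x ≤ 2 * M}.Nonempty := by
    rw [← card_pos, ← Nat.cast_pos (α := ℝ)]
    linarith [Nat.cast_nonneg (α := ℝ) (#{x ∈ s | f x ≤ 2 * M})]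
  have hM : 0 ≤ M := by
    have hs : (0 : ℝ) < #s := by exact_mod_cast (hne.mono (filter_subset _ _)).card_pos
    exact nonneg_of_mul_nonneg_right ((sum_nonneg hf).trans hsum) hs
  have hlt : #{x ∈ s | ¬f x ≤ 2 * M} * (2 * M) < ∑ x ∈ s, f x :=
    calc #{x ∈ s | ¬f x ≤ 2 * M} * (2 * M) = ∑ x ∈ s with ¬f x ≤ 2 * M, 2 * M := by
          rw [sum_const, nsmul_eq_mul]
      _ < ∑ x ∈ s with ¬f x ≤ 2 * M, f x :=
          sum_lt_sum_of_nonempty hne fun x hx ↦ not_le.1 (mem_filter.1 hx).2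
      _ ≤ ∑ x ∈ s, f x :=
          sum_le_sum_of_subset_of_nonneg (filter_subset _ _) fun x hx _ ↦ hf x hx
  have hmany : (#s : ℝ) / 2 ≤ #{x ∈ s | ¬f x ≤ 2 * M} := by linarith
  have hmass : #s * M ≤ #{x ∈ s | ¬f x ≤ 2 * M} * (2 * M) := by
    linarith [mul_le_mul_of_nonneg_right hmany hM]
  exact (hlt.trans_le hsum).not_ge hmass

lemma exists_card_le_card_mul_card_fiber {α β : Type*} [DecidableEq β] {s : Finset α}
    {t : Finset β} {f : α → β} (hf : ∀ x ∈ s, f x ∈ t) (ht : t.Nonempty) :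
    ∃ y ∈ t, #s ≤ #t * #{x ∈ s | f x = y} := by
  obtain ⟨y, hy, hmax⟩ := exists_max_image t (fun y ↦ #{x ∈ s | f x = y}) ht
  exact ⟨y, hy, by simpa only [mul_comm] using card_le_mul_card_image_of_maps_to hf _ hmax⟩

lemma one_sub_div_card_le_card_filter_div_card {α : Type*} {s : Finset α} (hs : s.Nonempty)
    {p : α → Prop} [DecidablePred p] {c : ℝ} (hc : (#{x ∈ s | ¬p x} : ℝ) ≤ c) :
    1 - c / #s ≤ (#{x ∈ s | p x} : ℝ) / #s := by
  have hpos : (0 : ℝ) < #s := by exact_mod_cast hs.card_pos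
  have hsplit : (#{x ∈ s | p x} : ℝ) + #{x ∈ s | ¬p x} = #s := by
    exact_mod_cast card_filter_add_card_filter_not (s := s) p
  rw [one_sub_div hpos.ne']
  gcongr
  linarith

section AddGroup

variable {G ι : Type*} [AddGroup G] [DecidableEq G] [Fintype ι]

/-- The measure of additive containment `ρ_{A→B}` in an arbitrary additive group. -/
noncomputable def containment (A B : Finset G) (y : G) : ℝ :=
  𝔼 a ∈ A, if y + a ∈ B then 1 else 0

/-- The empirical estimate of `ρ_{A→B}(y)` given by a tuple `g` of samples from `A`. -/
noncomputable def sampleContainment (g : ι → G) (B : Finset G) (y : G) : ℝ :=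
  𝔼 i, if y + g i ∈ B then 1 else 0

/-- The points at which the sample `g` misestimates `ρ_{A→B}` by more than `ε`. For `g` valued in
`A` both functions vanish outside `B - A`; cutting down to `B - A` makes this a finset even if `G`
is infinite. -/
noncomputable def badPoints (A B : Finset G) (ε : ℝ) (g : ι → G) : Finset G :=
  {y ∈ B - A | ε < |sampleContainment g B y - containment A B y|}

lemma sampleContainment_vadd (x : G) (g : ι → G) (B : Finset G) (y : G) :
    sampleContainment (x +ᵥ g) B y = sampleContainment g B (y + x) := by
  simp only [sampleContainment, Pi.vadd_apply, vadd_eq_add, add_assoc]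

lemma add_notMem_of_notMem_sub {A B : Finset G} {a y : G} (hy : y ∉ B - A) (ha : a ∈ A) :
    y + a ∉ B :=
  fun hB ↦ hy (add_sub_cancel_right y a ▸ sub_mem_sub hB ha)

lemma mem_badPoints {A B : Finset G} {ε : ℝ} (hε : 0 ≤ ε) {g : ι → G} (hg : ∀ i, g i ∈ A)
    {y : G} :
    y ∈ badPoints A B ε g ↔ ε < |sampleContainment g B y - containment A B y| := by
  refine mem_filter.trans (and_iff_right_of_imp fun hdev ↦ ?_)
  by_contra hy
  have hzero : sampleContainment g B y = 0 ∧ containment A B y = 0 :=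
    ⟨expect_eq_zero fun i _ ↦ if_neg (add_notMem_of_notMem_sub hy (hg i)),
      expect_eq_zero fun a ha ↦ if_neg (add_notMem_of_notMem_sub hy ha)⟩
  rw [hzero.1, hzero.2, sub_zero, abs_zero] at hdev
  exact hdev.not_ge hε

lemma card_filter_mem_badPoints_le [DecidableEq ι] {A : Finset G} (hA : A.Nonempty) (B : Finset G)
    {ε : ℝ} (hε : 0 ≤ ε) (y : G) :
    (#{g ∈ Fintype.piFinset fun _ : ι ↦ A | y ∈ badPoints A B ε g} : ℝ) ≤
      2 * Real.exp (-2 * ε ^ 2 * Fintype.card ι) * #A ^ Fintype.card ι := by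
  have hIcc : ∀ a ∈ A, (if y + a ∈ B then 1 else 0 : ℝ) ∈ Set.Icc 0 1 := by
    intro a _
    split_ifs <;> simp
  have hoeffding := card_filter_lt_abs_expect_sub_expect_le (ι := ι) hA hIcc hε
  rw [sub_zero, one_pow, div_one] at hoeffding
  refine le_trans ?_ hoeffding
  exact Nat.cast_le.2 (card_le_card (monotone_filter_right _ fun g _ hy ↦ (mem_filter.1 hy).2))

lemma sum_card_badPoints_le [DecidableEq ι] {A : Finset G} (hA : A.Nonempty) (B : Finset G)
    {ε : ℝ} (hε : 0 ≤ ε) :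
    ∑ g ∈ Fintype.piFinset fun _ : ι ↦ A, (#(badPoints A B ε g) : ℝ) ≤
      #(Fintype.piFinset fun _ : ι ↦ A) *
        (2 * Real.exp (-2 * ε ^ 2 * Fintype.card ι) * #(B - A)) := by
  have hbad (g : ι → G) : badPoints A B ε g = {y ∈ B - A | y ∈ badPoints A B ε g} := by
    rw [filter_mem_eq_inter]
    exact (inter_eq_right.2 (filter_subset _ _)).symm
  calc ∑ g ∈ Fintype.piFinset fun _ : ι ↦ A, (#(badPoints A B ε g) : ℝ)
      = ∑ y ∈ B - A, (#{g ∈ Fintype.piFinset fun _ : ι ↦ A | y ∈ badPoints A B ε g} : ℝ) := by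
        rw [sum_congr rfl fun g _ ↦ by rw [hbad g]]
        exact_mod_cast sum_card_bipartiteAbove_eq_sum_card_bipartiteBelow
          fun g y ↦ y ∈ badPoints A B ε g
    _ ≤ ∑ _y ∈ B - A, 2 * Real.exp (-2 * ε ^ 2 * Fintype.card ι) * #A ^ Fintype.card ι :=
        sum_le_sum fun y _ ↦ card_filter_mem_badPoints_le hA B hε y
    _ = _ := by
        rw [sum_const, nsmul_eq_mul, Fintype.card_piFinset, prod_const, card_univ, Nat.cast_pow]
        ring

lemma half_card_pow_le_card_filter_card_badPoints_le [DecidableEq ι] {A : Finset G}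
    (hA : A.Nonempty) (B : Finset G) {ε : ℝ} (hε : 0 ≤ ε) :
    1 / 2 * (#A : ℝ) ^ Fintype.card ι ≤ #{g ∈ Fintype.piFinset fun _ : ι ↦ A |
      (#(badPoints A B ε g) : ℝ) ≤ 4 * #(B - A) * Real.exp (-2 * ε ^ 2 * Fintype.card ι)} := by
  have hmarkov := half_card_le_card_filter_le_two_mul (fun _ _ ↦ Nat.cast_nonneg _)
    (sum_card_badPoints_le (ι := ι) hA B hε)
  convert hmarkov using 1
  · rw [Fintype.card_piFinset, prod_const, card_univ, Nat.cast_pow]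
    ring
  · congr! 4
    ring

lemma card_filter_lt_abs_containment_sub_le {A B : Finset G} {ε : ℝ} (hε : 0 ≤ ε)
    {g : ι → G} (hg : ∀ i, g i ∈ A) {x : G} (hxg : ∀ i, (x +ᵥ g) i ∈ A) (S : Finset G) :
    #{y ∈ S | 2 * ε < |containment A B y - containment A B (y + x)|} ≤
      #(badPoints A B ε (x +ᵥ g)) + #(badPoints A B ε g) := by
  have hcover : {y ∈ S | 2 * ε < |containment A B y - containment A B (y + x)|} ⊆
      badPoints A B ε (x +ᵥ g) ∪ (badPoints A B ε g).image fun z ↦ z - x := by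
    intro y hy
    have hfar := (mem_filter.1 hy).2
    by_contra hgood
    rw [mem_union, not_or] at hgood
    have hy_near := hgood.1
    have hyx_near : y + x ∉ badPoints A B ε g := fun hbad ↦
      hgood.2 (mem_image.2 ⟨y + x, hbad, add_sub_cancel_right y x⟩)
    rw [mem_badPoints hε hxg, sampleContainment_vadd, not_lt, abs_sub_comm] at hy_near
    rw [mem_badPoints hε hg, not_lt] at hyx_near
    have htri := abs_sub_le (containment A B y) (sampleContainment g B (y + x))
      (containment A B (y + x))
    linarith
  exact (card_le_card hcover).trans
    ((card_union_le _ _).trans (Nat.add_le_add_left card_image_le _))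

end AddGroup

section Differences

variable {G : Type*} [AddGroup G] {m : ℕ}

/-- The differences of a tuple with its first entry. Up to left translation, they determine the
tuple. -/
def headDifferences (g : Fin (m + 1) → G) : Fin m → G :=
  fun j ↦ -g 0 + g j.succ

lemma eq_vadd_of_headDifferences_eq {g h : Fin (m + 1) → G}
    (hgh : headDifferences g = headDifferences h) : g = (g 0 - h 0) +ᵥ h := by
  funext i
  refine Fin.cases (by simp) (fun j ↦ ?_) i
  have hj : -g 0 + g j.succ = -h 0 + h j.succ := congrFun hgh j
  rw [Pi.vadd_apply, vadd_eq_add, sub_eq_add_neg, add_assoc, ← hj, add_neg_cancel_left]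

variable [DecidableEq G]

lemma exists_translates_mem {A : Finset G} (hA : A.Nonempty) {K : ℝ}
    (hdoub : (#(-A + A) : ℝ) ≤ K * #A) {T : Finset (Fin (m + 1) → G)}
    (hT : T ⊆ Fintype.piFinset fun _ ↦ A) {δ : ℝ} (hδ : 0 < δ)
    (hcard : δ * #A ^ (m + 1) ≤ #T) :
    ∃ g ∈ T, ∃ X : Finset G, X ⊆ A.image (· + -g 0) ∧ δ * #A ≤ K ^ m * #X ∧
      ∀ x ∈ X, x +ᵥ g ∈ T := by
  have hApos : (0 : ℝ) < #A := by exact_mod_cast hA.card_pos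
  have hTA : ∀ g ∈ T, ∀ i, g i ∈ A := fun g hg ↦ Fintype.mem_piFinset.1 (hT hg)
  have hmaps : ∀ g ∈ T, headDifferences g ∈ Fintype.piFinset fun _ ↦ -A + A := fun g hg ↦
    Fintype.mem_piFinset.2 fun j ↦ add_mem_add (neg_mem_neg (hTA g hg 0)) (hTA g hg j.succ)
  obtain ⟨d, -, hd⟩ := exists_card_le_card_mul_card_fiber hmaps
    (Fintype.piFinset_nonempty.2 fun _ ↦ hA.neg.add hA)
  set F := {g ∈ T | headDifferences g = d}
  have hfiber : δ * #A ≤ K ^ m * #F := by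
    refine le_of_mul_le_mul_left ?_ (pow_pos hApos m)
    calc (#A : ℝ) ^ m * (δ * #A) = δ * #A ^ (m + 1) := by ring
      _ ≤ #(-A + A) ^ m * #F := hcard.trans (by
          rw [Fintype.card_piFinset_const] at hd
          exact_mod_cast hd)
      _ ≤ (K * #A) ^ m * #F := by gcongr
      _ = #A ^ m * (K ^ m * #F) := by ring
  obtain ⟨g, hg⟩ : F.Nonempty := by
    rw [nonempty_iff_ne_empty]
    intro hF
    rw [hF, card_empty, Nat.cast_zero, mul_zero] at hfiber
    exact (mul_pos hδ hApos).not_ge hfiber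
  have htranslate : ∀ h ∈ F, h = (h 0 - g 0) +ᵥ g := fun h hh ↦
    eq_vadd_of_headDifferences_eq ((mem_filter.1 hh).2.trans (mem_filter.1 hg).2.symm)
  refine ⟨g, (mem_filter.1 hg).1, F.image fun h ↦ h 0 - g 0, ?_, ?_, ?_⟩
  · refine image_subset_iff.2 fun h hh ↦ mem_image.2 ⟨h 0, hTA h (mem_filter.1 hh).1 0, ?_⟩
    exact (sub_eq_add_neg _ _).symm
  · rwa [card_image_of_injOn]
    intro h hh k hk hhk
    rw [htranslate h hh, htranslate k hk]
    exact congrArg (· +ᵥ g) hhk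
  · refine forall_mem_image.2 fun h hh ↦ ?_
    rw [← htranslate h hh]
    exact (mem_filter.1 hh).1

end Differences

theorem almost_periodicity_of_sumsets_general {G : Type*} [AddGroup G] [DecidableEq G]
    {A : Finset G} (hA : A.Nonempty) {K : ℝ} (hdoub : (#(-A + A) : ℝ) ≤ K * #A)
    {ε : ℝ} (hε : 0 ≤ ε) {t : ℕ} (ht : 0 < t) (B : Finset G) :
    ∃ X : Finset G, (∃ c, X ⊆ A.image (· + c)) ∧ (#A : ℝ) / (2 * K ^ (t - 1)) ≤ #X ∧
      ∀ x ∈ X, ∀ S : Finset G, S.Nonempty →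
        1 - 8 * ((#(B - A) : ℝ) / #S) * Real.exp (-2 * ε ^ 2 * t) ≤
          (#{y ∈ S | |containment A B y - containment A B (y + x)| ≤ 2 * ε} : ℝ) / #S := by
  obtain ⟨m, rfl⟩ := Nat.exists_eq_add_one.2 ht
  have hK : 0 < K := by
    have hpos : (0 : ℝ) < #(-A + A) := by exact_mod_cast (hA.neg.add hA).card_pos
    exact pos_of_mul_pos_left (hpos.trans_le hdoub) (Nat.cast_nonneg _)
  have hhalf := half_card_pow_le_card_filter_card_badPoints_le (ι := Fin (m + 1)) hA B hε
  rw [Fintype.card_fin] at hhalf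
  obtain ⟨g, hg, X, hXA, hXcard, hX⟩ :=
    exists_translates_mem hA hdoub (filter_subset _ _) one_half_pos hhalf
  refine ⟨X, ⟨-g 0, hXA⟩, ?_, fun x hx S hS ↦ ?_⟩
  · rw [Nat.add_sub_cancel, div_le_iff₀ (by positivity)]
    linarith
  · obtain ⟨hgA, hgbad⟩ := mem_filter.1 hg
    obtain ⟨hxA, hxbad⟩ := mem_filter.1 (hX x hx)
    have hcover := card_filter_lt_abs_containment_sub_le (B := B) hε
      (Fintype.mem_piFinset.1 hgA) (Fintype.mem_piFinset.1 hxA) S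
    rw [← mul_div_assoc, div_mul_eq_mul_div]
    refine one_sub_div_card_le_card_filter_div_card hS ?_
    simp only [not_le]
    rify at hcover
    linarith

lemma neg_finset_eq_self {G : Type*} [AddCommGroup G] [Module (ZMod 2) G] [DecidableEq G]
    (A : Finset G) : -A = A := by
  ext x
  rw [mem_neg', ZModModule.neg_eq_self]

lemma rhoMeas_eq_containment {n : ℕ} (A B : Finset (Fin n → ZMod 2)) :
    rhoMeas A B = containment A B := by
  funext y
  rw [rhoMeas, containment, expect_eq_sum_div_card, sum_boole]

theorem almost_periodicity_of_sumsets {n : ℕ} (K : ℝ) (hK : 1 ≤ K)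
    (A : Finset (Fin n → ZMod 2)) (hA : A.Nonempty)
    (hdoub : ((A + A).card : ℝ) ≤ K * A.card)
    (ε : ℝ) (hε : 0 < ε) (t : ℕ) (ht : 0 < t) (B : Finset (Fin n → ZMod 2)) :
    ∃ X : Finset (Fin n → ZMod 2),
      (∃ c : Fin n → ZMod 2, X ⊆ A.image (fun a => c + a)) ∧
      (A.card : ℝ) / (2 * K ^ (t - 1)) ≤ X.card ∧
      ∀ x ∈ X, ∀ S : Finset (Fin n → ZMod 2), S.Nonempty →
        1 - 8 * (((A + B).card : ℝ) / S.card) * Real.exp (-2 * ε ^ 2 * t) ≤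
          prOver S (fun y => |rhoMeas A B y - rhoMeas A B (y + x)| ≤ 2 * ε) := by
  convert almost_periodicity_of_sumsets_general hA (by rwa [neg_finset_eq_self]) hε.le ht B
    using 7 <;>
  simp only [prOver, rhoMeas_eq_containment, sub_eq_add_neg B, neg_finset_eq_self, add_comm]
end

section
/- Let K ≥ 1 and let A be a nonempty subset of F_2^n satisfying |A + A| ≤ K·|A|. Then for every real ε > 0, every positive integer t, and every set B ⊆ F_2^n there exists a set X ⊆ F_2^n with the following properties: (1) X is contained in an affine shift of A, i.e. there exists c ∈ F_2^n with X ⊆ c + A; (2) |X| ≥ |A|/(2·K^{t−1}); (3) for every positive integer ℓ, all x₁, …, x_ℓ ∈ X, and every nonempty subset S ⊆ F_2^n, Pr_{y∈S}[ |ρ_{A→B}(y) − ρ_{A→B}(y + x₁ + ⋯ + x_ℓ)| ≤ 2εℓ ] ≥ 1 − 8ℓ·(|A+B|/|S|)·exp(−2ε²t). -/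
open scoped Classical Pointwise

/-!
Sample `t` independent uniform points `a₁, …, a_t` of `A`. By Hoeffding's inequality the
proportion of the translates `y + aᵢ` lying in `B` estimates `ρ_{A→B}(y)` up to `ε`, for every `y`
outside a small random subset of `B - A`, so at least half of the tuples in `A ^ t` are good
estimators off few points. The map `a ↦ (-a₁ + aᵢ)_{i ≥ 2}` takes at most `|-A + A| ^ (t - 1)`
values, so some fibre contains many good tuples; these are translates `x + g` of a single good
tuple `g`. The estimate given by `x + g` at `y` is the estimate given by `g` at `y + x`, whence
`ρ(y) ≈ ρ(y + x)` for most `y`. Sums of several such `x` are handled by the triangle inequality.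
-/

open Finset MeasureTheory ProbabilityTheory
open scoped BigOperators

section Hoeffding

variable {ι Ω : Type*} [Fintype ι] [Fintype Ω]

theorem real_uniformOn_univ [MeasurableSpace Ω] [MeasurableSingletonClass Ω] (s : Finset Ω) :
    (uniformOn (Set.univ : Set Ω)).real s = (#s : ℝ) / Fintype.card Ω := by
  simp [measureReal_def, uniformOn_univ]

theorem integral_uniformOn_univ [MeasurableSpace Ω] [MeasurableSingletonClass Ω] (f : Ω → ℝ) :
    ∫ ω, f ω ∂uniformOn (Set.univ : Set Ω) = 𝔼 ω, f ω := by
  cases isEmpty_or_nonempty Ω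
  · rw [Measure.eq_zero_of_isEmpty (uniformOn _), integral_zero_measure, univ_eq_empty,
      expect_empty]
  have := isProbabilityMeasure_uniformOn (Set.finite_univ (α := Ω)) Set.univ_nonempty
  rw [integral_fintype .of_finite, Fintype.expect_eq_sum_div_card, Finset.sum_div]
  refine sum_congr rfl fun ω _ => ?_
  rw [← coe_singleton, real_uniformOn_univ]
  simp [div_eq_inv_mul]

theorem card_expect_sub_ge_le [Nonempty ι] [Nonempty Ω] {f : Ω → ℝ}
    (hf : ∀ ω, f ω ∈ Set.Icc 0 1) {ε : ℝ} (hε : 0 ≤ ε) :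
    (#{a : ι → Ω | ε ≤ 𝔼 i, f (a i) - 𝔼 ω, f ω} : ℝ) ≤
      Fintype.card (ι → Ω) * Real.exp (-2 * ε ^ 2 * Fintype.card ι) := by
  let _ : MeasurableSpace Ω := ⊤
  have : DiscreteMeasurableSpace Ω := ⟨fun _ => trivial⟩
  let μ : Measure Ω := uniformOn Set.univ
  have : IsProbabilityMeasure μ := isProbabilityMeasure_uniformOn Set.finite_univ Set.univ_nonempty
  have hpi : Measure.pi (fun _ : ι => μ) = uniformOn Set.univ := by
    rw [← uniformOn_pi, Set.pi_univ]
  have hsub (i : ι) : HasSubgaussianMGF (fun a : ι → Ω => f (a i) - 𝔼 ω, f ω)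
      ((‖(1 : ℝ) - 0‖₊ / 2) ^ 2) (Measure.pi fun _ : ι => μ) := by
    have h := hasSubgaussianMGF_of_mem_Icc (μ := μ) (measurable_of_finite f).aemeasurable
      (.of_forall hf)
    rw [integral_uniformOn_univ] at h
    exact .of_map (measurable_pi_apply i).aemeasurable
      (by rwa [(measurePreserving_eval (fun _ : ι => μ) i).map_eq])
  have hindep : iIndepFun (fun i (a : ι → Ω) => f (a i) - 𝔼 ω, f ω)
      (Measure.pi fun _ : ι => μ) :=
    iIndepFun_pi (X := fun _ ω => f ω - 𝔼 ω, f ω) fun _ => (measurable_of_finite _).aemeasurable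
  have hι : (0 : ℝ) < Fintype.card ι := mod_cast Fintype.card_pos
  have hset : {a : ι → Ω | Fintype.card ι * ε ≤ ∑ i, (f (a i) - 𝔼 ω, f ω)} =
      ({a : ι → Ω | ε ≤ 𝔼 i, f (a i) - 𝔼 ω, f ω} : Finset (ι → Ω)) := by
    ext a
    rw [Set.mem_ofPred_eq, ← le_div_iff₀' hι, ← Fintype.expect_eq_sum_div_card,
      expect_sub_distrib, Fintype.expect_const, mem_coe, mem_filter_univ]
  have htail := HasSubgaussianMGF.measure_sum_ge_le_of_iIndepFun hindep (s := univ)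
    (fun i _ => hsub i) (mul_nonneg hι.le hε)
  rw [hset, hpi, real_uniformOn_univ, div_le_iff₀' (mod_cast Fintype.card_pos)] at htail
  have hexponent : -(Fintype.card ι * ε) ^ 2 /
      (2 * ((∑ _i : ι, (‖(1 : ℝ) - 0‖₊ / 2) ^ 2 : NNReal) : ℝ)) =
        -2 * ε ^ 2 * Fintype.card ι := by
    simp only [sub_zero, nnnorm_one, sum_const, card_univ, nsmul_eq_mul]
    push_cast
    field_simp
  rwa [hexponent] at htail

theorem card_abs_expect_sub_gt_le [Nonempty ι] [Nonempty Ω] {f : Ω → ℝ}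
    (hf : ∀ ω, f ω ∈ Set.Icc 0 1) {ε : ℝ} (hε : 0 ≤ ε) :
    (#{a : ι → Ω | ε < |𝔼 i, f (a i) - 𝔼 ω, f ω|} : ℝ) ≤
      Fintype.card (ι → Ω) * (2 * Real.exp (-2 * ε ^ 2 * Fintype.card ι)) := by
  have hupper := card_expect_sub_ge_le (ι := ι) hf hε
  have hlower := card_expect_sub_ge_le (ι := ι) (f := fun ω => 1 - f ω)
    (fun ω => Set.Icc.mem_iff_one_sub_mem.mp (hf ω)) hε
  simp only [expect_sub_distrib, Fintype.expect_const, sub_sub_sub_cancel_left] at hlower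
  have hunion : #{a : ι → Ω | ε < |𝔼 i, f (a i) - 𝔼 ω, f ω|} ≤
      #{a : ι → Ω | ε ≤ 𝔼 i, f (a i) - 𝔼 ω, f ω} + #{a : ι → Ω | ε ≤ 𝔼 ω, f ω - 𝔼 i, f (a i)} := by
    refine (card_le_card fun a ha => ?_).trans (card_union_le _ _)
    simp only [mem_union, mem_filter_univ] at ha ⊢
    simpa only [le_abs, neg_sub] using ha.le
  have : (#{a : ι → Ω | ε < |𝔼 i, f (a i) - 𝔼 ω, f ω|} : ℝ) ≤ _ := Nat.cast_le.mpr hunion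
  push_cast at this
  linarith

end Hoeffding

theorem card_le_two_mul_card_le_of_sum_le {Ω : Type*} [Fintype Ω] {f : Ω → ℝ} {M : ℝ}
    (hf : ∀ ω, 0 ≤ f ω) (hM : ∑ ω, f ω ≤ Fintype.card Ω * M) :
    Fintype.card Ω ≤ 2 * #{ω | f ω ≤ 2 * M} := by
  by_contra! hfew
  have hsplit : #{ω | f ω ≤ 2 * M} + #{ω | 2 * M < f ω} = Fintype.card Ω := by
    simp only [← not_le]
    exact card_filter_add_card_filter_not _
  have hmost : Fintype.card Ω ≤ 2 * #{ω | 2 * M < f ω} := by lia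
  have hM₀ : 0 ≤ M := by
    have hΩ : (0 : ℝ) < Fintype.card Ω := mod_cast zero_le.trans_lt hfew
    exact nonneg_of_mul_nonneg_right ((sum_nonneg fun ω _ => hf ω).trans hM) hΩ
  have : ∑ ω, f ω < ∑ ω, f ω := calc
    ∑ ω, f ω ≤ Fintype.card Ω * M := hM
    _ ≤ (2 * #{ω | 2 * M < f ω} : ℕ) * M := by gcongr
    _ = ∑ ω with 2 * M < f ω, 2 * M := by rw [sum_const, nsmul_eq_mul]; push_cast; ring
    _ < ∑ ω with 2 * M < f ω, f ω :=
      sum_lt_sum_of_nonempty (card_pos.mp (by lia)) fun ω hω => (mem_filter_univ ω).mp hω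
    _ ≤ ∑ ω, f ω := sum_le_univ_sum_of_nonneg hf
  exact this.false

section CloseOff

variable {α β E : Type*} [PseudoMetricSpace E] {δ δ' M M' : ℝ} {f g h : α → E}

/-- `f` and `g` are within `δ` of each other except at no more than `M` points. The exceptional
points are counted inside finite sets, so that the bound makes sense on an infinite domain. -/
def IsCloseOff (δ M : ℝ) (f g : α → E) : Prop :=
  ∀ S : Finset α, (#{y ∈ S | δ < dist (f y) (g y)} : ℝ) ≤ M

namespace IsCloseOff

theorem refl (f : α → E) : IsCloseOff 0 0 f f := by
  simp [IsCloseOff]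

theorem symm (hfg : IsCloseOff δ M f g) : IsCloseOff δ M g f := by
  simpa only [IsCloseOff, dist_comm] using hfg

theorem trans (hfg : IsCloseOff δ M f g) (hgh : IsCloseOff δ' M' g h) :
    IsCloseOff (δ + δ') (M + M') f h := by
  intro S
  have hunion : #{y ∈ S | δ + δ' < dist (f y) (h y)} ≤
      #{y ∈ S | δ < dist (f y) (g y)} + #{y ∈ S | δ' < dist (g y) (h y)} := by
    refine (card_le_card fun y hy => ?_).trans (card_union_le _ _)
    simp only [mem_union, mem_filter] at hy ⊢
    grind [dist_triangle (f y) (g y) (h y)]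
  calc (#{y ∈ S | δ + δ' < dist (f y) (h y)} : ℝ)
      ≤ #{y ∈ S | δ < dist (f y) (g y)} + #{y ∈ S | δ' < dist (g y) (h y)} := mod_cast hunion
    _ ≤ M + M' := add_le_add (hfg S) (hgh S)

theorem comp_injective (hfg : IsCloseOff δ M f g) {e : β → α} (he : e.Injective) :
    IsCloseOff δ M (f ∘ e) (g ∘ e) := by
  intro S
  have := hfg (S.image e)
  rwa [filter_image, card_image_of_injective _ he] at this

theorem of_eqOn_compl (hδ : 0 ≤ δ) {T : Finset α} (hT : ∀ y ∉ T, f y = g y) :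
    IsCloseOff δ #{y ∈ T | δ < dist (f y) (g y)} f g := by
  intro S
  refine mod_cast card_le_card fun y hy => ?_
  simp only [mem_filter] at hy ⊢
  refine ⟨by_contra fun hyT => ?_, hy.2⟩
  simp only [hT y hyT, dist_self] at hy
  exact hy.2.not_ge hδ

theorem mono_card (hfg : IsCloseOff δ M f g) (hM : M ≤ M') : IsCloseOff δ M' f g :=
  fun S => (hfg S).trans hM

theorem one_sub_div_card_le (hfg : IsCloseOff δ M f g) {S : Finset α} (hS : S.Nonempty) :
    1 - M / #S ≤ (#{y ∈ S | dist (f y) (g y) ≤ δ} : ℝ) / #S := by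
  have hS' : (0 : ℝ) < #S := mod_cast hS.card_pos
  have hsplit : (#{y ∈ S | dist (f y) (g y) ≤ δ} : ℝ) + #{y ∈ S | δ < dist (f y) (g y)} = #S := by
    simp only [← not_le]
    exact mod_cast card_filter_add_card_filter_not (s := S) _
  rw [one_sub_div hS'.ne']
  gcongr
  linarith [hfg S]

theorem list_sum {G : Type*} [AddGroup G] {f : G → E} (l : List G)
    (hl : ∀ x ∈ l, IsCloseOff δ M f fun y => f (y + x)) :
    IsCloseOff (l.length * δ) (l.length * M) f fun y => f (y + l.sum) := by
  induction l with
  | nil => simpa using refl f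
  | cons x l ih =>
    have hx := hl x List.mem_cons_self
    have htail := (ih fun z hz => hl z (List.mem_cons_of_mem x hz)).comp_injective
      (add_left_injective x)
    simpa [Function.comp_def, add_assoc, add_one_mul, add_comm] using hx.trans htail

end IsCloseOff

end CloseOff

section Containment

variable {G ι : Type*} [AddGroup G] [DecidableEq G] [Fintype ι] {A : Finset G} {ε M : ℝ}

/-- The proportion of the translates `y + a i` that lie in `B`. For the inclusion `a : A → G` this
is the measure of additive containment `ρ_{A→B}(y)`; for a tuple `a` of elements of `A` it is the
empirical estimate of `ρ_{A→B}(y)`. -/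
noncomputable def containmentRate (a : ι → G) (B : Finset G) (y : G) : ℝ :=
  𝔼 i, if y + a i ∈ B then 1 else 0

theorem containmentRate_val (A B : Finset G) (y : G) :
    containmentRate ((↑) : A → G) B y = (#{a ∈ A | y + a ∈ B} : ℝ) / #A := by
  simp only [containmentRate, Fintype.expect_eq_sum_div_card, Fintype.card_coe]
  rw [sum_coe_sort A fun a => if y + a ∈ B then (1 : ℝ) else 0, sum_boole]

theorem containmentRate_add_left (x : G) (a : ι → G) (B : Finset G) (y : G) :
    containmentRate (fun i => x + a i) B y = containmentRate a B (y + x) := by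
  simp only [containmentRate, add_assoc]

theorem containmentRate_eq_zero {a : ι → G} (ha : ∀ i, a i ∈ A) {B : Finset G} {y : G}
    (hy : y ∉ B - A) : containmentRate a B y = 0 := by
  refine expect_eq_zero fun i _ => if_neg fun hB => hy ?_
  simpa using sub_mem_sub hB (ha i)

theorem card_containmentRate_deviation_le [Nonempty ι] (hA : A.Nonempty) (B : Finset G) (y : G)
    (hε : 0 ≤ ε) :
    (#{a : ι → A | ε < dist (containmentRate (fun i => (a i : G)) B y)
        (containmentRate ((↑) : A → G) B y)} : ℝ) ≤
      Fintype.card (ι → A) * (2 * Real.exp (-2 * ε ^ 2 * Fintype.card ι)) := by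
  have := hA.to_subtype
  refine card_abs_expect_sub_gt_le (f := fun a : A => if y + a ∈ B then (1 : ℝ) else 0)
    (fun a => ?_) hε
  split_ifs <;> simp

theorem sum_card_containmentRate_deviation_le [Nonempty ι] (hA : A.Nonempty) (B T : Finset G)
    (hε : 0 ≤ ε) :
    ∑ a : ι → A, (#{y ∈ T | ε < dist (containmentRate (fun i => (a i : G)) B y)
        (containmentRate ((↑) : A → G) B y)} : ℝ) ≤
      Fintype.card (ι → A) * (2 * #T * Real.exp (-2 * ε ^ 2 * Fintype.card ι)) := by
  calc _ = ∑ y ∈ T, (#{a : ι → A | ε < dist (containmentRate (fun i => (a i : G)) B y)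
        (containmentRate ((↑) : A → G) B y)} : ℝ) := by
        simp only [natCast_card_filter]
        exact sum_comm
    _ ≤ #T • (Fintype.card (ι → A) * (2 * Real.exp (-2 * ε ^ 2 * Fintype.card ι))) :=
        sum_le_card_nsmul _ _ _ fun y _ => card_containmentRate_deviation_le hA B y hε
    _ = _ := by rw [nsmul_eq_mul]; ring

theorem exists_many_isCloseOff_containmentRate (ι : Type*) [Fintype ι] [Nonempty ι]
    (hA : A.Nonempty) (B : Finset G) (hε : 0 ≤ ε) :
    ∃ F : Finset (ι → G), #A ^ Fintype.card ι ≤ 2 * #F ∧ ∀ a ∈ F, (∀ i, a i ∈ A) ∧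
      IsCloseOff ε (4 * #(B - A) * Real.exp (-2 * ε ^ 2 * Fintype.card ι))
        (containmentRate a B) (containmentRate ((↑) : A → G) B) := by
  have hmany := card_le_two_mul_card_le_of_sum_le (fun _ => Nat.cast_nonneg _)
    (sum_card_containmentRate_deviation_le (ι := ι) hA B (B - A) hε)
  let coords (a : ι → A) (i : ι) : G := a i
  have hcoords : coords.Injective := Subtype.val_injective.comp_left
  rw [Fintype.card_fun, Fintype.card_coe, ← card_image_of_injective _ hcoords] at hmany
  refine ⟨_, hmany, forall_mem_image.mpr fun a ha => ⟨fun i => (a i).2, ?_⟩⟩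
  have hoff := IsCloseOff.of_eqOn_compl hε fun y hy =>
    (containmentRate_eq_zero (B := B) (fun i => (a i).2) hy).trans
      (containmentRate_eq_zero Subtype.prop hy).symm
  exact hoff.mono_card (((mem_filter_univ a).mp ha).trans_eq (by ring))

theorem isCloseOff_translate_of_estimators {f : G → ℝ} {a : ι → G} {B : Finset G} {x : G}
    (ha : IsCloseOff ε M (containmentRate a B) f)
    (hxa : IsCloseOff ε M (containmentRate (fun i => x + a i) B) f) :
    IsCloseOff (2 * ε) (2 * M) f fun y => f (y + x) := by
  have ha' := ha.comp_injective (add_left_injective x)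
  have hshift : containmentRate (fun i => x + a i) B = containmentRate a B ∘ (· + x) :=
    funext (containmentRate_add_left x a B)
  rw [hshift] at hxa
  simpa only [two_mul, Function.comp_def] using hxa.symm.trans ha'

end Containment

section Pigeonhole

variable {G : Type*} [AddGroup G] {m : ℕ}

theorem sub_add_eq_of_neg_add_succ_eq {a g : Fin (m + 1) → G}
    (h : ∀ i : Fin m, -a 0 + a i.succ = -g 0 + g i.succ) : (fun i => a 0 - g 0 + g i) = a := by
  funext i
  refine Fin.cases (sub_add_cancel _ _) (fun j => ?_) i
  rw [sub_eq_add_neg, add_assoc, ← h, add_neg_cancel_left]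

theorem exists_many_translates_mem {F : Finset (Fin (m + 1) → G)} (hF : F.Nonempty) {D : Finset G}
    (hD : ∀ a ∈ F, ∀ i : Fin m, -a 0 + a i.succ ∈ D) :
    ∃ g ∈ F, ∃ X : Finset G, #F ≤ #X * #D ^ m ∧ ∀ x ∈ X, (fun i => x + g i) ∈ F := by
  let φ (a : Fin (m + 1) → G) (i : Fin m) : G := -a 0 + a i.succ
  have hφ : ∀ a ∈ F, φ a ∈ Fintype.piFinset fun _ : Fin m => D := fun a ha =>
    Fintype.mem_piFinset.mpr (hD a ha)
  obtain ⟨d, -, hd⟩ := exists_max_image (Fintype.piFinset fun _ : Fin m => D)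
    (fun d => #{a ∈ F | φ a = d}) (let ⟨a, ha⟩ := hF; ⟨φ a, hφ a ha⟩)
  have hcard := card_le_mul_card_image_of_maps_to hφ _ hd
  rw [Fintype.card_piFinset_const] at hcard
  obtain ⟨g, hg⟩ : {a ∈ F | φ a = d}.Nonempty :=
    card_pos.mp (pos_of_mul_pos_left (hF.card_pos.trans_le hcard) zero_le)
  have htranslate : ∀ a ∈ {a ∈ F | φ a = d}, (fun i => a 0 - g 0 + g i) = a := fun a ha =>
    sub_add_eq_of_neg_add_succ_eq
      (congrFun ((mem_filter.mp ha).2.trans (mem_filter.mp hg).2.symm))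
  refine ⟨g, (mem_filter.mp hg).1, image (fun a => a 0 - g 0) {a ∈ F | φ a = d}, ?_, ?_⟩
  · rwa [card_image_of_injOn]
    intro a ha b hb hab
    rw [← htranslate a ha, ← htranslate b hb]
    simp only at hab
    simp only [hab]
  · refine forall_mem_image.mpr fun a ha => ?_
    rw [htranslate a ha]
    exact (mem_filter.mp ha).1

end Pigeonhole

theorem almost_periodicity_of_sumsets_iterated_general {G : Type*} [AddGroup G] [DecidableEq G]
    (K : ℝ) (A : Finset G) (hA : A.Nonempty) (hdoub : (#(-A + A) : ℝ) ≤ K * #A)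
    (ε : ℝ) (hε : 0 ≤ ε) (t : ℕ) (ht : 0 < t) (B : Finset G) :
    ∃ X : Finset G, (∃ c : G, X ⊆ A.image (· + c)) ∧ (#A : ℝ) / (2 * K ^ (t - 1)) ≤ #X ∧
      ∀ l : List G, (∀ x ∈ l, x ∈ X) → ∀ S : Finset G, S.Nonempty →
        1 - 8 * l.length * ((#(B - A) : ℝ) / #S) * Real.exp (-2 * ε ^ 2 * t) ≤
          (#{y ∈ S | |containmentRate ((↑) : A → G) B y -
            containmentRate ((↑) : A → G) B (y + l.sum)| ≤ 2 * ε * l.length} : ℝ) / #S := by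
  obtain ⟨m, rfl⟩ : ∃ m, t = m + 1 := Nat.exists_eq_add_one.mpr ht
  have hA' : (0 : ℝ) < #A := mod_cast hA.card_pos
  obtain ⟨F, hFcard, hF⟩ := exists_many_isCloseOff_containmentRate (Fin (m + 1)) hA B hε
  rw [Fintype.card_fin] at hFcard hF
  have hFne : F.Nonempty := card_pos.mp (by have := pow_pos hA.card_pos (m + 1); lia)
  obtain ⟨g, hg, X, hXcard, hX⟩ := exists_many_translates_mem hFne (D := -A + A)
    fun a ha i => add_mem_add (neg_mem_neg ((hF a ha).1 0)) ((hF a ha).1 i.succ)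
  refine ⟨X, ⟨-g 0, fun x hx => ?_⟩, ?_, fun l hl S hS => ?_⟩
  · exact mem_image.mpr ⟨x + g 0, (hF _ (hX x hx)).1 0, add_neg_cancel_right x (g 0)⟩
  · have hK : 0 < K := pos_of_mul_pos_left
      (((Nat.cast_pos.mpr (hA.neg.add hA).card_pos)).trans_le hdoub) hA'.le
    rw [add_tsub_cancel_right, div_le_iff₀ (by positivity)]
    refine le_of_mul_le_mul_right ?_ (pow_pos hA' m)
    calc (#A : ℝ) * #A ^ m = #A ^ (m + 1) := (pow_succ' _ _).symm
      _ ≤ 2 * #F := mod_cast hFcard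
      _ ≤ 2 * (#X * #(-A + A) ^ m) := by gcongr; exact_mod_cast hXcard
      _ ≤ 2 * (#X * (K * #A) ^ m) := by gcongr
      _ = #X * (2 * K ^ m) * #A ^ m := by ring
  · have hperiod := IsCloseOff.list_sum l fun x hx =>
      isCloseOff_translate_of_estimators (hF g hg).2 (hF _ (hX x (hl x hx))).2
    convert hperiod.one_sub_div_card_le hS using 1
    · ring
    · simp only [Real.dist_eq, mul_comm]

theorem almost_periodicity_of_sumsets_iterated {n : ℕ} (K : ℝ) (hK : 1 ≤ K)
    (A : Finset (Fin n → ZMod 2)) (hA : A.Nonempty)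
    (hdoub : ((A + A).card : ℝ) ≤ K * A.card)
    (ε : ℝ) (hε : 0 < ε) (t : ℕ) (ht : 0 < t) (B : Finset (Fin n → ZMod 2)) :
    ∃ X : Finset (Fin n → ZMod 2),
      (∃ c : Fin n → ZMod 2, X ⊆ A.image (fun a => c + a)) ∧
      (A.card : ℝ) / (2 * K ^ (t - 1)) ≤ X.card ∧
      ∀ ℓ : ℕ, 0 < ℓ → ∀ x : Fin ℓ → (Fin n → ZMod 2), (∀ i, x i ∈ X) →
        ∀ S : Finset (Fin n → ZMod 2), S.Nonempty →
          1 - 8 * ℓ * (((A + B).card : ℝ) / S.card) * Real.exp (-2 * ε ^ 2 * t) ≤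
            prOver S (fun y =>
              |rhoMeas A B y - rhoMeas A B (y + ∑ i, x i)| ≤ 2 * ε * ℓ) := by
  have hneg (C : Finset (Fin n → ZMod 2)) : -C = C := by
    ext x
    rw [mem_neg', ZModModule.neg_eq_self]
  have hrho : rhoMeas A B = containmentRate ((↑) : A → Fin n → ZMod 2) B :=
    funext fun y => (containmentRate_val A B y).symm
  obtain ⟨X, ⟨c, hc⟩, hX, hperiod⟩ := almost_periodicity_of_sumsets_iterated_general K A hA
    (by rwa [hneg]) ε hε.le t ht B
  refine ⟨X, ⟨c, by simpa only [add_comm c] using hc⟩, hX, fun ℓ _ x hx S hS => ?_⟩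
  have := hperiod (List.ofFn x) (List.forall_mem_ofFn_iff.mpr hx) S hS
  rw [List.length_ofFn, List.sum_ofFn, sub_eq_add_neg B, hneg, add_comm B] at this
  rw [prOver, hrho]
  convert this
end

section
/- Let α ∈ (0,1] and let A ⊆ F_2^n satisfy |A| ≥ α·2^n. Then for every real ε > 0, every positive integer t, and every nonempty set B ⊆ F_2^n there exists a linear subspace V of F_2^n with codimension codim(V) = n − dim(V) ≤ 32·log(2/α^t) such that: for every v ∈ V, every nonempty subset S ⊆ F_2^n, every real η > 0, and every positive integer ℓ, Pr_{y∈S}[ |ρ_{A→B}(y) − ρ_{A→B}(y + v)| ≤ ε' ] ≥ 1 − 16·(ℓ/η)·(|A+B|/|S|)·exp(−2ε²t), where ε' = 4εℓ + 2η + 2^{−ℓ}·√(|B|/|A|). -/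
open scoped Classical Pointwise

/-!
Let `F = ρ_{A→B}`. By Hoeffding's inequality the empirical average of `1_B (y + a i)` over `t`
random samples `a i ∈ A` is within `ε` of `F y` except with probability `2 exp (-2 ε² t)`, and it
vanishes together with `F` outside `A + B`. So most sample vectors approximate `F` with small
`ℓ¹`-excess over `ε`. By pigeonhole over the cosets of the diagonal, a single sampled function `h`
has a set `X` of density about `|A| ^ t / |V| ^ t` of translates that are all close to `F`. Hence
averaging `F` over `X - X = X + X` barely changes it, and neither do `ℓ` iterations of this. They
damp the Fourier coefficient at `φ` by `bias X φ ^ (2 ℓ)`, so the smoothed function is nearly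
invariant under the annihilator of the characters of bias at least `1 / 4`, whose span has small
dimension by Chang's lemma.
-/

open Finset Function Module
open scoped BigOperators

section Hoeffding

variable {ι : Type*} {s : Finset ι} {f : ι → ℝ} {a b : ℝ}

lemma integral_toMeasure_uniformOfFinset [MeasurableSpace ι] [MeasurableSingletonClass ι]
    (hs : s.Nonempty) (f : ι → ℝ)
    (hf : MeasureTheory.Integrable f (PMF.uniformOfFinset s hs).toMeasure) :
    ∫ i, f i ∂(PMF.uniformOfFinset s hs).toMeasure = 𝔼 i ∈ s, f i := by
  rw [PMF.integral_eq_tsum _ _ hf, tsum_eq_sum (s := s) fun i hi => by simp [hi],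
    expect_eq_sum_div_card, sum_div]
  refine sum_congr rfl fun i hi => ?_
  simp [hi, div_eq_inv_mul]

lemma expect_exp_mul_sub_expect_le (hs : s.Nonempty) (hf : ∀ i ∈ s, f i ∈ Set.Icc a b) (c : ℝ) :
    𝔼 i ∈ s, Real.exp (c * (f i - 𝔼 j ∈ s, f j)) ≤ Real.exp (c ^ 2 * (b - a) ^ 2 / 8) := by
  let _ : MeasurableSpace ι := ⊤
  have hmem : ∀ᵐ i ∂(PMF.uniformOfFinset s hs).toMeasure, f i ∈ Set.Icc a b := by
    rw [MeasureTheory.ae_iff, PMF.toMeasure_apply_eq_zero_iff _ MeasurableSpace.measurableSet_top,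
      PMF.support_uniformOfFinset, Set.disjoint_left]
    exact fun i hi h => h (hf i hi)
  have hmeas : Measurable f := measurable_from_top
  have hsub := ProbabilityTheory.hasSubgaussianMGF_of_mem_Icc hmeas.aemeasurable hmem
  have hexp := hsub.mgf_le c
  have hint := MeasureTheory.Integrable.of_mem_Icc a b hmeas.aemeasurable hmem
  rw [integral_toMeasure_uniformOfFinset hs f hint] at hexp hsub
  rw [ProbabilityTheory.mgf, integral_toMeasure_uniformOfFinset hs _
    (hsub.integrable_exp_mul c)] at hexp
  refine hexp.trans_eq ?_
  simp [div_pow, mul_comm]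
  ring

lemma expect_ite_lt_expect_sub_le (hs : s.Nonempty) (hab : a < b)
    (hf : ∀ i ∈ s, f i ∈ Set.Icc a b) {t : ℕ} (ht : 0 < t) {ε : ℝ} (hε : 0 ≤ ε) :
    𝔼 x ∈ Fintype.piFinset fun _ : Fin t => s,
        (if ε < (𝔼 k, f (x k)) - 𝔼 i ∈ s, f i then 1 else 0 : ℝ) ≤
      Real.exp (-2 * ε ^ 2 * t / (b - a) ^ 2) := by
  set μ := 𝔼 i ∈ s, f i
  have hba : 0 < b - a := sub_pos.2 hab
  have ht' : (0 : ℝ) < t := Nat.cast_pos.2 ht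
  set c := 4 * ε / (b - a) ^ 2 with hc
  have markov (x : Fin t → ι) :
      (if ε < (𝔼 k, f (x k)) - μ then 1 else 0 : ℝ) ≤
        Real.exp (-(c * (t * ε))) * ∏ k, Real.exp (c * (f (x k) - μ)) := by
    have hsum : ∑ k, c * (f (x k) - μ) = c * (t * ((𝔼 k, f (x k)) - μ)) := by
      rw [← mul_sum, sum_sub_distrib, Fintype.expect_eq_sum_div_card]
      simp [mul_sub, mul_div_cancel₀ _ ht'.ne']
    rw [← Real.exp_sum, hsum, ← Real.exp_add]
    split_ifs with h
    · refine Real.one_le_exp ?_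
      rw [neg_add_eq_sub, ← mul_sub, ← mul_sub]
      have := sub_pos.2 h
      positivity
    · positivity
  calc _ ≤ 𝔼 x ∈ Fintype.piFinset fun _ : Fin t => s,
          Real.exp (-(c * (t * ε))) * ∏ k, Real.exp (c * (f (x k) - μ)) :=
        expect_le_expect fun x _ => markov x
    _ = Real.exp (-(c * (t * ε))) * (𝔼 i ∈ s, Real.exp (c * (f i - μ))) ^ t := by
        rw [← mul_expect, expect_pow]
    _ ≤ Real.exp (-(c * (t * ε))) * Real.exp (c ^ 2 * (b - a) ^ 2 / 8) ^ t := by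
        gcongr
        exact expect_exp_mul_sub_expect_le hs hf c
    _ = Real.exp (-2 * ε ^ 2 * t / (b - a) ^ 2) := by
        rw [← Real.exp_nat_mul, ← Real.exp_add, hc]
        congr 1
        field_simp
        ring

lemma expect_ite_lt_abs_expect_sub_le (hs : s.Nonempty) (hab : a < b)
    (hf : ∀ i ∈ s, f i ∈ Set.Icc a b) {t : ℕ} (ht : 0 < t) {ε : ℝ} (hε : 0 ≤ ε) :
    𝔼 x ∈ Fintype.piFinset fun _ : Fin t => s,
        (if ε < |(𝔼 k, f (x k)) - 𝔼 i ∈ s, f i| then 1 else 0 : ℝ) ≤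
      2 * Real.exp (-2 * ε ^ 2 * t / (b - a) ^ 2) := by
  have upper := expect_ite_lt_expect_sub_le hs hab hf ht hε
  have lower := expect_ite_lt_expect_sub_le (f := -f) hs (neg_lt_neg hab)
    (fun i hi => ⟨neg_le_neg (hf i hi).2, neg_le_neg (hf i hi).1⟩) ht hε
  simp only [Pi.neg_apply, expect_neg_distrib, neg_sub_neg] at lower
  rw [two_mul]
  refine le_trans ?_ (add_le_add upper lower)
  rw [← expect_add_distrib]
  refine expect_le_expect fun x _ => ?_
  simp only [lt_abs, neg_sub]
  by_cases hup : ε < (𝔼 k, f (x k)) - 𝔼 i ∈ s, f i <;>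
    by_cases hlow : ε < (𝔼 i ∈ s, f i) - 𝔼 k, f (x k) <;> simp [hup, hlow]

end Hoeffding

section Counting

lemma card_le_two_mul_card_filter_le {ι : Type*} {s : Finset ι} {f : ι → ℝ}
    (hf : ∀ i ∈ s, 0 ≤ f i) {M : ℝ} (hM : 0 < M) (h : 𝔼 i ∈ s, f i ≤ M) :
    (#s : ℝ) ≤ 2 * #{i ∈ s | f i ≤ 2 * M} := by
  have split : (#{i ∈ s | f i ≤ 2 * M} : ℝ) + #{i ∈ s | ¬ f i ≤ 2 * M} = #s := mod_cast
    card_filter_add_card_filter_not (s := s) fun i => f i ≤ 2 * M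
  have large : #{i ∈ s | ¬ f i ≤ 2 * M} * (2 * M) ≤ #s * M := by
    calc _ ≤ ∑ i ∈ s with ¬ f i ≤ 2 * M, f i := by
          rw [← nsmul_eq_mul]
          exact card_nsmul_le_sum _ _ _ fun i hi => (not_le.1 (mem_filter.1 hi).2).le
      _ ≤ ∑ i ∈ s, f i :=
          sum_le_sum_of_subset_of_nonneg (filter_subset _ _) fun i hi _ => hf i hi
      _ = #s * 𝔼 i ∈ s, f i := by rw [← nsmul_eq_mul, card_smul_expect]
      _ ≤ #s * M := by gcongr
  have : (#{i ∈ s | ¬ f i ≤ 2 * M} : ℝ) * 2 ≤ #s := le_of_mul_le_mul_right (by linarith) hM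
  linarith

lemma exists_card_mul_card_le_card_mul_card_filter_add_mem {H κ : Type*} [AddGroup H]
    [Fintype H] [DecidableEq H] [Fintype κ] (P : Finset H) (φ : κ → H) :
    ∃ g : H, #P * Fintype.card κ ≤ Fintype.card H * #{x | g + φ x ∈ P} := by
  have hsum : ∑ g : H, #{x | g + φ x ∈ P} = #P * Fintype.card κ := by
    have hP (x : κ) : #{g | g + φ x ∈ P} = #P :=
      card_equiv (Equiv.addRight (φ x)) (by simp)
    simp only [card_filter] at hP ⊢
    rw [sum_comm]
    simp [hP, mul_comm]
  obtain ⟨g, -, hg⟩ := exists_le_of_sum_le (s := univ) (f := fun _ : H => #P * Fintype.card κ)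
    (g := fun g => Fintype.card H * #{x | g + φ x ∈ P}) univ_nonempty
    (by rw [sum_const, card_univ, smul_eq_mul, ← mul_sum, hsum])
  exact ⟨g, hg⟩

lemma one_sub_div_le_card_filter_div_card {α : Type*} [Fintype α] {p : α → Prop} {K : ℝ}
    (hK : #{y | ¬ p y} ≤ K) {S : Finset α} (hS : S.Nonempty) :
    1 - K / #S ≤ (#{y ∈ S | p y} : ℝ) / #S := by
  have hS' : (0 : ℝ) < #S := Nat.cast_pos.2 hS.card_pos
  have split : (#{y ∈ S | p y} : ℝ) + #{y ∈ S | ¬ p y} = #S := mod_cast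
    card_filter_add_card_filter_not p
  have bad : (#{y ∈ S | ¬ p y} : ℝ) ≤ K :=
    le_trans (mod_cast card_le_card (filter_subset_filter _ (subset_univ S))) hK
  rw [one_sub_div hS'.ne']
  gcongr
  linarith

end Counting

section L1Excess

variable {α ι : Type*} [Fintype α] {c : ℝ} {f h : α → ℝ}

/-- The `ℓ¹`-mass of the part of `|f - h|` that exceeds `c`. -/
noncomputable def l1Excess (c : ℝ) (f h : α → ℝ) : ℝ :=
  ∑ y, max (|f y - h y| - c) 0

lemma l1Excess_nonneg (c : ℝ) (f h : α → ℝ) : 0 ≤ l1Excess c f h :=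
  sum_nonneg fun _ _ => le_max_right _ _

lemma l1Excess_comm (c : ℝ) (f h : α → ℝ) : l1Excess c f h = l1Excess c h f := by
  simp only [l1Excess, abs_sub_comm]

lemma l1Excess_eq_zero (hfh : ∀ y, |f y - h y| ≤ c) : l1Excess c f h = 0 :=
  sum_eq_zero fun y _ => max_eq_right (sub_nonpos.2 (hfh y))

lemma l1Excess_add_le (c d : ℝ) (f g h : α → ℝ) :
    l1Excess (c + d) f h ≤ l1Excess c f g + l1Excess d g h := by
  simp only [l1Excess, ← sum_add_distrib]
  gcongr with y
  have := abs_sub_le (f y) (g y) (h y)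
  refine max_le ?_ (add_nonneg (le_max_right _ _) (le_max_right _ _))
  linarith [le_max_left (|f y - g y| - c) 0, le_max_left (|g y - h y| - d) 0]

lemma l1Excess_comp_equiv (e : α ≃ α) (c : ℝ) (f h : α → ℝ) :
    l1Excess c (f ∘ e) (h ∘ e) = l1Excess c f h :=
  Equiv.sum_comp e fun y => max (|f y - h y| - c) 0

lemma l1Excess_expect_le {s : Finset ι} (hs : s.Nonempty) (c : ℝ) (f h : ι → α → ℝ) :
    l1Excess c (fun y => 𝔼 i ∈ s, f i y) (fun y => 𝔼 i ∈ s, h i y) ≤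
      𝔼 i ∈ s, l1Excess c (f i) (h i) := by
  simp only [l1Excess]
  rw [expect_sum_comm]
  gcongr with y
  refine max_le ?_ (expect_nonneg fun _ _ => le_max_right _ _)
  calc |𝔼 i ∈ s, f i y - 𝔼 i ∈ s, h i y| - c
      ≤ 𝔼 i ∈ s, |f i y - h i y| - c := by
        rw [← expect_sub_distrib]
        gcongr
        exact abs_expect_le _ _
    _ = 𝔼 i ∈ s, (|f i y - h i y| - c) := by rw [expect_sub_distrib, expect_const hs]
    _ ≤ 𝔼 i ∈ s, max (|f i y - h i y| - c) 0 := expect_le_expect fun _ _ => le_max_left _ _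

lemma l1Excess_iterate_le {T : (α → ℝ) → α → ℝ}
    (hT : ∀ c f h, l1Excess c (T f) (T h) ≤ l1Excess c f h) (c : ℝ) (f : α → ℝ) (l : ℕ) :
    l1Excess (l * c) f (T^[l] f) ≤ l * l1Excess c f (T f) := by
  induction l with
  | zero => simp [l1Excess]
  | succ l ih =>
    rw [iterate_succ_apply', Nat.cast_succ, add_one_mul, add_one_mul, add_comm,
      add_comm (_ * _)]
    exact (l1Excess_add_le c (l * c) f (T f) _).trans
      (add_le_add_right ((hT _ _ _).trans ih) _)

lemma l1Excess_le_sum_ite (hc : 0 ≤ c) (hfh : ∀ y, |f y - h y| ≤ 1) :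
    l1Excess c f h ≤ ∑ y, if c < |f y - h y| then 1 else 0 := by
  unfold l1Excess
  gcongr with y
  split_ifs with hy
  · exact max_le (by linarith [hfh y]) zero_le_one
  · exact (max_eq_right (by linarith)).le

lemma card_filter_lt_abs_sub_le_l1Excess_div (c : ℝ) {η : ℝ} (hη : 0 < η) (f h : α → ℝ) :
    (#{y | c + η < |f y - h y|} : ℝ) ≤ l1Excess c f h / η := by
  rw [le_div_iff₀ hη, ← nsmul_eq_mul]
  calc _ ≤ ∑ y with c + η < |f y - h y|, max (|f y - h y| - c) 0 :=
        card_nsmul_le_sum _ _ _ fun y hy =>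
          le_max_of_le_left (by linarith [(mem_filter.1 hy).2])
    _ ≤ l1Excess c f h :=
        sum_le_sum_of_subset_of_nonneg (filter_subset _ _) fun _ _ _ => le_max_right _ _

end L1Excess

section TranslateAvg

variable {G : Type*} [AddCommGroup G] {f : G → ℝ}

/-- The function `y ↦ 𝔼_{a ∈ A} f (y + a)`, which for the indicator `f` of a set `B` is the measure
of additive containment `ρ_{A→B}`. -/
noncomputable def translateAvg (A : Finset G) (f : G → ℝ) (y : G) : ℝ :=
  𝔼 a ∈ A, f (y + a)

/-- The function `y ↦ 𝔼_i f (y + a i)`, which approximates `translateAvg A f` when the `a i` are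
independent samples from `A`. -/
noncomputable def sampleAvg {t : ℕ} (a : Fin t → G) (f : G → ℝ) (y : G) : ℝ :=
  𝔼 i, f (y + a i)

lemma translateAvg_mem_Icc {a b : ℝ} (hf : ∀ x, f x ∈ Set.Icc a b) {A : Finset G} (hA : A.Nonempty)
    (y : G) : translateAvg A f y ∈ Set.Icc a b :=
  ⟨le_expect hA fun _ _ => (hf _).1, expect_le hA fun _ _ => (hf _).2⟩

lemma sampleAvg_mem_Icc {a b : ℝ} (hf : ∀ x, f x ∈ Set.Icc a b) {t : ℕ} (ht : 0 < t)
    (x : Fin t → G) (y : G) : sampleAvg x f y ∈ Set.Icc a b := by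
  have := Fin.pos_iff_nonempty.1 ht
  exact ⟨le_expect univ_nonempty fun _ _ => (hf _).1, expect_le univ_nonempty fun _ _ => (hf _).2⟩

variable [Fintype G]

lemma l1Excess_translate (x : G) (c : ℝ) (f h : G → ℝ) :
    l1Excess c (fun y => f (y + x)) (fun y => h (y + x)) = l1Excess c f h :=
  l1Excess_comp_equiv (Equiv.addRight x) c f h

lemma l1Excess_translateAvg_le {X : Finset G} (hX : X.Nonempty) (c : ℝ) (f h : G → ℝ) :
    l1Excess c (translateAvg X f) (translateAvg X h) ≤ l1Excess c f h := by
  have := l1Excess_expect_le hX c (fun x y => f (y + x)) fun x y => h (y + x)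
  simp only [l1Excess_translate, expect_const hX] at this
  exact this

lemma l1Excess_translateAvg_right_le {X : Finset G} (hX : X.Nonempty) {c M : ℝ} {f h : G → ℝ}
    (hM : ∀ x ∈ X, l1Excess c f (fun y => h (y + x)) ≤ M) :
    l1Excess c f (translateAvg X h) ≤ M := by
  have := l1Excess_expect_le hX c (fun _ => f) fun x y => h (y + x)
  simp only [expect_const hX] at this
  exact this.trans (expect_le hX hM)

lemma l1Excess_translateAvg_translateAvg_neg_le [DecidableEq G] {X : Finset G}
    (hX : X.Nonempty) {c M : ℝ} {f h : G → ℝ}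
    (hM : ∀ x ∈ X, l1Excess c f (fun y => h (y + x)) ≤ M) :
    l1Excess (2 * c) f (translateAvg X (translateAvg (-X) f)) ≤ 2 * M := by
  have hM' : ∀ x ∈ -X, l1Excess c h (fun y => f (y + x)) ≤ M := fun x hx => by
    rw [l1Excess_comm, ← l1Excess_translate (-x)]
    simpa using hM (-x) (mem_neg'.1 hx)
  rw [two_mul, two_mul]
  calc _ ≤ l1Excess c f (translateAvg X h)
          + l1Excess c (translateAvg X h) (translateAvg X (translateAvg (-X) f)) :=
        l1Excess_add_le ..
    _ ≤ M + M := add_le_add (l1Excess_translateAvg_right_le hX hM)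
        ((l1Excess_translateAvg_le hX ..).trans (l1Excess_translateAvg_right_le hX.neg hM'))

lemma expect_l1Excess_sampleAvg_le [DecidableEq G] (hf : ∀ x, f x ∈ Set.Icc 0 1)
    {B : Finset G} (hB : ∀ x ∉ B, f x = 0) {A : Finset G} (hA : A.Nonempty) {t : ℕ}
    (ht : 0 < t) {ε : ℝ} (hε : 0 ≤ ε) :
    𝔼 a ∈ Fintype.piFinset fun _ : Fin t => A, l1Excess ε (sampleAvg a f) (translateAvg A f) ≤
      #(B - A) * (2 * Real.exp (-2 * ε ^ 2 * t)) := by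
  set Ω := Fintype.piFinset fun _ : Fin t => A
  have hfar {y : G} (hy : y ∉ B - A) {a : G} (ha : a ∈ A) : f (y + a) = 0 :=
    hB _ fun h => hy (mem_sub.2 ⟨y + a, h, a, ha, add_sub_cancel_right y a⟩)
  have hdev (y : G) : 𝔼 a ∈ Ω, (if ε < |sampleAvg a f y - translateAvg A f y| then 1 else 0) ≤
      if y ∈ B - A then 2 * Real.exp (-2 * ε ^ 2 * t) else 0 := by
    split_ifs with hy
    · have := expect_ite_lt_abs_expect_sub_le hA zero_lt_one (fun a _ => hf (y + a)) ht hε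
      rwa [sub_zero, one_pow, div_one] at this
    · refine (expect_eq_zero fun a ha => if_neg ?_).le
      have hsample : sampleAvg a f y = 0 :=
        expect_eq_zero fun i _ => hfar hy (Fintype.mem_piFinset.1 ha i)
      have havg : translateAvg A f y = 0 := expect_eq_zero fun a ha => hfar hy ha
      simpa [hsample, havg] using hε
  calc _ ≤ 𝔼 a ∈ Ω, ∑ y, (if ε < |sampleAvg a f y - translateAvg A f y| then 1 else 0 : ℝ) :=
        expect_le_expect fun a _ => l1Excess_le_sum_ite hε fun y => by
          simpa using abs_sub_le_of_le_of_le (sampleAvg_mem_Icc hf ht a y).1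
            (sampleAvg_mem_Icc hf ht a y).2 (translateAvg_mem_Icc hf hA y).1
            (translateAvg_mem_Icc hf hA y).2
    _ ≤ ∑ y, if y ∈ B - A then 2 * Real.exp (-2 * ε ^ 2 * t) else 0 := by
        rw [expect_sum_comm]
        exact sum_le_sum fun y _ => hdev y
    _ = #(B - A) * (2 * Real.exp (-2 * ε ^ 2 * t)) := by
        rw [sum_ite_mem, univ_inter, sum_const, nsmul_eq_mul]

lemma exists_l1Excess_translateAvg_translate_le [DecidableEq G]
    (hf : ∀ x, f x ∈ Set.Icc 0 1) {B : Finset G} (hB : ∀ x ∉ B, f x = 0) (hB' : B.Nonempty)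
    {A : Finset G} (hA : A.Nonempty) {t : ℕ} (ht : 0 < t) {ε : ℝ} (hε : 0 ≤ ε) :
    ∃ (h : G → ℝ) (X : Finset G),
      (#A / Fintype.card G : ℝ) ^ t * Fintype.card G ≤ 2 * #X ∧
      ∀ x ∈ X, l1Excess ε (translateAvg A f) (fun y => h (y + x)) ≤
        4 * #(B - A) * Real.exp (-2 * ε ^ 2 * t) := by
  set M := #(B - A) * (2 * Real.exp (-2 * ε ^ 2 * t))
  have hM : 0 < M := by
    have := (hB'.sub hA).card_pos
    positivity
  set P := {a ∈ Fintype.piFinset fun _ : Fin t => A |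
    l1Excess ε (sampleAvg a f) (translateAvg A f) ≤ 2 * M}
  have hP : (#A : ℝ) ^ t ≤ 2 * #P := by
    simpa using card_le_two_mul_card_filter_le (fun _ _ => l1Excess_nonneg _ _ _) hM
      (expect_l1Excess_sampleAvg_le hf hB hA ht hε)
  obtain ⟨g, hg⟩ := exists_card_mul_card_le_card_mul_card_filter_add_mem P
    fun (x : G) (_ : Fin t) => x
  refine ⟨sampleAvg g f, univ.filter fun x => (g + fun _ => x) ∈ P, ?_, fun x hx => ?_⟩
  · have hg' : (#P * Fintype.card G : ℝ) ≤
        Fintype.card G ^ t * #{x : G | (g + fun _ => x) ∈ P} := by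
      rw [Fintype.card_pi_const] at hg
      exact_mod_cast hg
    rw [div_pow, div_mul_eq_mul_div, div_le_iff₀ (by positivity)]
    calc (#A : ℝ) ^ t * Fintype.card G ≤ 2 * #P * Fintype.card G := by gcongr
      _ ≤ _ := by linarith
  · have hshift : (fun y => sampleAvg g f (y + x)) = sampleAvg (g + fun _ => x) f := by
      funext y
      simp [sampleAvg, add_assoc, add_comm x]
    rw [l1Excess_comm, hshift]
    exact (mem_filter.1 (mem_filter.1 hx).2).2.trans_eq (by ring)

lemma card_filter_lt_abs_sub_translate_le {c d η : ℝ} (hη : 0 < η) {f h : G → ℝ} {v : G}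
    (hv : ∀ y, |h y - h (y + v)| ≤ d) :
    (#{y | 2 * c + d + η < |f y - f (y + v)|} : ℝ) ≤ 2 * l1Excess c f h / η := by
  refine (card_filter_lt_abs_sub_le_l1Excess_div (2 * c + d) hη f fun y => f (y + v)).trans ?_
  gcongr
  calc _ = l1Excess (c + (d + c)) f fun y => f (y + v) := by ring_nf
    _ ≤ l1Excess c f h + (l1Excess d h (fun y => h (y + v))
          + l1Excess c (fun y => h (y + v)) fun y => f (y + v)) :=
        (l1Excess_add_le ..).trans (add_le_add_right (l1Excess_add_le ..) _)
    _ = 2 * l1Excess c f h := by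
        rw [l1Excess_eq_zero hv, l1Excess_translate, l1Excess_comm c h]
        ring

end TranslateAvg

section WalshChar

variable {V : Type*} [AddCommGroup V] [Module (ZMod 2) V]

/-- The character `x ↦ (-1) ^ φ x` attached to a linear functional `φ` on a vector space over
`ZMod 2`. -/
noncomputable def walshChar (φ : Dual (ZMod 2) V) : AddChar V ℝ :=
  (AddChar.zmodChar 2 (ζ := -1) neg_one_sq).compAddMonoidHom φ.toAddMonoidHom

lemma walshChar_apply (φ : Dual (ZMod 2) V) (x : V) : walshChar φ x = (-1) ^ (φ x).val :=
  rfl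

lemma walshChar_eval (x : V) (φ : Dual (ZMod 2) V) :
    walshChar (Dual.eval (ZMod 2) V x) φ = walshChar φ x :=
  rfl

lemma abs_walshChar_apply (φ : Dual (ZMod 2) V) (x : V) : |walshChar φ x| = 1 :=
  abs_neg_one_pow _

lemma walshChar_mul_self (φ : Dual (ZMod 2) V) (x : V) : walshChar φ x * walshChar φ x = 1 := by
  rw [← abs_mul_abs_self, abs_walshChar_apply, one_mul]

lemma walshChar_apply_eq_one_iff (φ : Dual (ZMod 2) V) (x : V) :
    walshChar φ x = 1 ↔ φ x = 0 := by
  rw [walshChar_apply]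
  generalize φ x = a
  fin_cases a
  · exact iff_of_true (pow_zero _) rfl
  · exact iff_of_false (by norm_num [ZMod.val]) one_ne_zero

lemma exp_mul_walshChar (s : ℝ) (φ : Dual (ZMod 2) V) (x : V) :
    Real.exp (s * walshChar φ x) = Real.sinh s * walshChar φ x + Real.cosh s := by
  obtain h | h := eq_or_eq_neg_of_abs_eq (abs_walshChar_apply φ x) <;> rw [h]
  · rw [mul_one, mul_one, Real.sinh_add_cosh]
  · rw [mul_neg_one, mul_neg_one, neg_add_eq_sub, Real.cosh_sub_sinh]

lemma walshChar_eq_zero_iff (φ : Dual (ZMod 2) V) : walshChar φ = 0 ↔ φ = 0 := by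
  simp only [AddChar.eq_zero_iff, walshChar_apply_eq_one_iff, LinearMap.ext_iff,
    LinearMap.zero_apply]

lemma walshChar_sum_apply {ι : Type*} (s : Finset ι) (φ : ι → Dual (ZMod 2) V) (x : V) :
    walshChar (∑ i ∈ s, φ i) x = ∏ i ∈ s, walshChar (φ i) x := by
  induction s using Finset.cons_induction with
  | empty => simp [walshChar_apply]
  | cons i s hi ih =>
    rw [sum_cons, prod_cons, ← ih]
    exact AddChar.map_add_eq_mul (walshChar (Dual.eval (ZMod 2) V x)) _ _

lemma expect_walshChar [Fintype V] (φ : Dual (ZMod 2) V) :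
    𝔼 x, walshChar φ x = if φ = 0 then 1 else 0 := by
  simp only [AddChar.expect_eq_ite, walshChar_eq_zero_iff]

lemma sum_walshChar_mul_walshChar [Fintype V] [Fintype (Dual (ZMod 2) V)] (x y : V) :
    ∑ φ, walshChar φ x * walshChar φ y = if x = y then (Fintype.card V : ℝ) else 0 := by
  have hcard : Fintype.card (Dual (ZMod 2) V) = Fintype.card V := by
    rw [card_eq_pow_finrank (K := ZMod 2), Subspace.dual_finrank_eq,
      card_eq_pow_finrank (K := ZMod 2) (V := V)]
  calc ∑ φ, walshChar φ x * walshChar φ y = ∑ φ, walshChar (Dual.eval (ZMod 2) V (x - y)) φ := by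
        simp only [ZModModule.sub_eq_add, walshChar_eval, AddChar.map_add_eq_mul]
    _ = if x = y then (Fintype.card V : ℝ) else 0 := by
        simp only [AddChar.sum_eq_ite, walshChar_eq_zero_iff, eval_apply_eq_zero_iff, sub_eq_zero,
          hcard]

end WalshChar

section FourierAnalysis

variable {V : Type*} [AddCommGroup V] [Module (ZMod 2) V]

/-- The bias `𝔼_{x ∈ X} (-1) ^ φ x`, which is the Fourier coefficient at `φ` of the uniform
probability measure on `X`. -/
noncomputable def bias (X : Finset V) (φ : Dual (ZMod 2) V) : ℝ :=
  𝔼 x ∈ X, walshChar φ x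

/-- The Fourier coefficient `𝔼_x f x (-1) ^ φ x`. -/
noncomputable def walshCoeff [Fintype V] (f : V → ℝ) (φ : Dual (ZMod 2) V) : ℝ :=
  𝔼 x, f x * walshChar φ x

variable [Fintype V]

lemma walshCoeff_translateAvg (X : Finset V) (f : V → ℝ) (φ : Dual (ZMod 2) V) :
    walshCoeff (translateAvg X f) φ = bias X φ * walshCoeff f φ := by
  have hshift (a : V) :
      𝔼 x, f (x + a) * walshChar φ x = walshChar φ a * 𝔼 x, f x * walshChar φ x := by
    rw [← Fintype.expect_equiv (Equiv.addRight a) (fun x => f (x + a) * walshChar φ (x + a))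
      (fun x => f x * walshChar φ x) fun _ => rfl, mul_expect]
    refine expect_congr rfl fun x _ => ?_
    linear_combination (-f (x + a) * walshChar φ x) * walshChar_mul_self φ a
      + (-f (x + a) * walshChar φ a) * AddChar.map_add_eq_mul (walshChar φ) x a
  simp only [walshCoeff, translateAvg, bias, expect_mul]
  rw [expect_comm]
  simp only [hshift]

lemma walshCoeff_iterate_translateAvg (X : Finset V) (f : V → ℝ) (l : ℕ) (φ : Dual (ZMod 2) V) :
    walshCoeff ((translateAvg X)^[l] f) φ = bias X φ ^ l * walshCoeff f φ := by
  induction l with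
  | zero => simp
  | succ l ih => rw [iterate_succ_apply', walshCoeff_translateAvg, ih, pow_succ', mul_assoc]

variable [Fintype (Dual (ZMod 2) V)]

lemma sum_walshCoeff_mul_walshChar (f : V → ℝ) (y : V) :
    ∑ φ, walshCoeff f φ * walshChar φ y = f y := by
  simp only [walshCoeff, expect_mul, mul_assoc]
  rw [← expect_sum_comm]
  simp only [← mul_sum, sum_walshChar_mul_walshChar, mul_ite, mul_zero]
  rw [Fintype.expect_eq_sum_div_card, sum_ite_eq', if_pos (mem_univ y),
    mul_div_cancel_right₀ _ (Nat.cast_ne_zero.2 Fintype.card_ne_zero)]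

lemma sum_walshCoeff_sq (f : V → ℝ) : ∑ φ, walshCoeff f φ ^ 2 = 𝔼 x, f x ^ 2 := by
  calc ∑ φ, walshCoeff f φ ^ 2 = ∑ φ, 𝔼 x, f x * (walshCoeff f φ * walshChar φ x) := by
        refine sum_congr rfl fun φ _ => ?_
        rw [sq]
        nth_rw 2 [walshCoeff]
        rw [mul_expect]
        exact expect_congr rfl fun x _ => mul_left_comm ..
    _ = 𝔼 x, f x ^ 2 := by
        rw [← expect_sum_comm]
        simp only [← mul_sum, sum_walshCoeff_mul_walshChar, sq]

lemma sum_bias_sq (X : Finset V) : ∑ φ, bias X φ ^ 2 = Fintype.card V / #X := by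
  have hdiag : ∀ x ∈ X, 𝔼 y ∈ X, (if x = y then (Fintype.card V : ℝ) else 0) =
      Fintype.card V / #X := fun x hx => by
    rw [expect_eq_sum_div_card, sum_ite_eq, if_pos hx]
  calc ∑ φ, bias X φ ^ 2 = 𝔼 x ∈ X, 𝔼 y ∈ X, ∑ φ, walshChar φ x * walshChar φ y := by
        simp only [expect_sum_comm, bias, sq, expect_mul_expect]
    _ = 𝔼 _x ∈ X, (Fintype.card V / #X : ℝ) := by
        simp only [sum_walshChar_mul_walshChar]
        exact expect_congr rfl hdiag
    _ = Fintype.card V / #X := by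
        obtain rfl | hX := X.eq_empty_or_nonempty
        · simp
        · exact expect_const hX _

lemma sum_abs_walshCoeff_translateAvg_le (A : Finset V) (f : V → ℝ) :
    ∑ φ, |walshCoeff (translateAvg A f) φ| ≤ √((∑ x, f x ^ 2) / #A) := by
  calc ∑ φ, |walshCoeff (translateAvg A f) φ|
      = ∑ φ, |bias A φ| * |walshCoeff f φ| := by simp only [walshCoeff_translateAvg, abs_mul]
    _ ≤ √(∑ φ, |bias A φ| ^ 2) * √(∑ φ, |walshCoeff f φ| ^ 2) := Real.sum_mul_le_sqrt_mul_sqrt ..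
    _ = √((∑ x, f x ^ 2) / #A) := by
        simp only [sq_abs, sum_bias_sq, sum_walshCoeff_sq]
        rw [← Real.sqrt_mul (by positivity), Fintype.expect_eq_sum_div_card]
        congr 1
        field_simp

lemma abs_iterate_translateAvg_sub_le {X : Finset V} {v : V} {δ : ℝ} (hδ : 0 ≤ δ)
    (hv : ∀ φ, δ ≤ |bias X φ| → walshChar φ v = 1) (f : V → ℝ) (l : ℕ) (y : V) :
    |(translateAvg X)^[l] f y - (translateAvg X)^[l] f (y + v)| ≤
      2 * δ ^ l * ∑ φ, |walshCoeff f φ| := by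
  have hterm (φ : Dual (ZMod 2) V) :
      |bias X φ ^ l * walshCoeff f φ * (walshChar φ y - walshChar φ (y + v))| ≤
        2 * δ ^ l * |walshCoeff f φ| := by
    rcases le_or_gt δ |bias X φ| with h | h
    · rw [AddChar.map_add_eq_mul, hv φ h, mul_one, sub_self, mul_zero, abs_zero]
      positivity
    · have hdiff : |walshChar φ y - walshChar φ (y + v)| ≤ 2 :=
        (abs_sub _ _).trans_eq (by simp only [abs_walshChar_apply, one_add_one_eq_two])
      rw [abs_mul, abs_mul, abs_pow]
      calc _ ≤ δ ^ l * |walshCoeff f φ| * 2 := by gcongr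
        _ = 2 * δ ^ l * |walshCoeff f φ| := by ring
  rw [← sum_walshCoeff_mul_walshChar ((translateAvg X)^[l] f) y,
    ← sum_walshCoeff_mul_walshChar ((translateAvg X)^[l] f) (y + v), ← sum_sub_distrib, mul_sum]
  simp only [walshCoeff_iterate_translateAvg, ← mul_sub]
  exact (abs_sum_le_sum_abs _ _).trans (sum_le_sum fun φ _ => hterm φ)

end FourierAnalysis

section Chang

variable {V : Type*} [AddCommGroup V] [Module (ZMod 2) V] [Fintype V] {b : Finset (Dual (ZMod 2) V)}

lemma expect_prod_walshChar_add (hb : LinearIndepOn (ZMod 2) id (b : Set (Dual (ZMod 2) V)))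
    (p q : Dual (ZMod 2) V → ℝ) :
    𝔼 x, ∏ φ ∈ b, (q φ * walshChar φ x + p φ) = ∏ φ ∈ b, p φ := by
  have hsum {s : Finset (Dual (ZMod 2) V)} (hs : s ⊆ b) (hs' : s.Nonempty) : ∑ φ ∈ s, φ ≠ 0 := by
    intro h
    obtain ⟨φ, hφ⟩ := hs'
    have := linearIndepOn_finset_iff.1 hb (fun ψ => if ψ ∈ s then 1 else 0)
      (by simpa [inter_eq_right.2 hs] using h) φ (hs hφ)
    simp [hφ] at this
  have hterm : ∀ s ∈ b.powerset, s ≠ ∅ →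
      𝔼 x, (∏ φ ∈ s, q φ * walshChar φ x) * ∏ φ ∈ b \ s, p φ = 0 := fun s hs hs' => by
    simp only [prod_mul_distrib, ← walshChar_sum_apply, ← expect_mul, ← mul_expect,
      expect_walshChar, if_neg (hsum (mem_powerset.1 hs) (nonempty_iff_ne_empty.2 hs')), mul_zero,
      zero_mul]
  simp only [prod_add, expect_sum_comm]
  rw [sum_eq_single_of_mem ∅ (empty_mem_powerset b) hterm]
  simp

-- Rudin's inequality: linear independence makes the characters behave like independent signs.
lemma expect_exp_sum_mul_walshChar_le
    (hb : LinearIndepOn (ZMod 2) id (b : Set (Dual (ZMod 2) V))) (s : Dual (ZMod 2) V → ℝ) :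
    𝔼 x, Real.exp (∑ φ ∈ b, s φ * walshChar φ x) ≤ Real.exp ((∑ φ ∈ b, s φ ^ 2) / 2) := by
  simp only [Real.exp_sum, exp_mul_walshChar, expect_prod_walshChar_add hb, sum_div]
  exact prod_le_prod (fun _ _ => (Real.cosh_pos _).le) fun _ _ => Real.cosh_le_exp_half_sq _

lemma exp_expect_le_card_div_card_mul {ι : Type*} [Fintype ι] {X : Finset ι} (hX : X.Nonempty)
    (g : ι → ℝ) :
    Real.exp (𝔼 i ∈ X, g i) ≤ Fintype.card ι / #X * 𝔼 i, Real.exp (g i) := by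
  have := hX.to_type
  have hX' : (0 : ℝ) < #X := Nat.cast_pos.2 hX.card_pos
  calc Real.exp (𝔼 i ∈ X, g i) ≤ 𝔼 i ∈ X, Real.exp (g i) := by
        have := convexOn_exp.map_sum_le (t := X) (w := fun _ => (#X : ℝ)⁻¹) (p := g)
          (fun _ _ => by positivity) (by simp [hX'.ne']) fun _ _ => Set.mem_univ _
        simpa only [expect_eq_sum_div_card, div_eq_inv_mul, smul_eq_mul, ← mul_sum] using this
    _ ≤ (∑ i, Real.exp (g i)) / #X := by
        rw [expect_eq_sum_div_card]
        gcongr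
        exact subset_univ X
    _ = Fintype.card ι / #X * 𝔼 i, Real.exp (g i) := by
        rw [Fintype.expect_eq_sum_div_card]
        field_simp

lemma sum_bias_sq_le_two_mul_log (hb : LinearIndepOn (ZMod 2) id (b : Set (Dual (ZMod 2) V)))
    {X : Finset V} (hX : X.Nonempty) :
    ∑ φ ∈ b, bias X φ ^ 2 ≤ 2 * Real.log (Fintype.card V / #X) := by
  set E := ∑ φ ∈ b, bias X φ ^ 2 with hE
  have hexp : Real.exp E ≤ Fintype.card V / #X * Real.exp (E / 2) := by
    calc Real.exp E = Real.exp (𝔼 x ∈ X, ∑ φ ∈ b, bias X φ * walshChar φ x) := by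
          simp only [expect_sum_comm, ← mul_expect, hE, sq, bias]
      _ ≤ Fintype.card V / #X * 𝔼 x, Real.exp (∑ φ ∈ b, bias X φ * walshChar φ x) :=
          exp_expect_le_card_div_card_mul hX _
      _ ≤ Fintype.card V / #X * Real.exp (E / 2) := by
          gcongr
          exact expect_exp_sum_mul_walshChar_le hb _
  rw [← Real.le_log_iff_exp_le (by positivity), Real.log_mul (by positivity) (Real.exp_ne_zero _),
    Real.log_exp] at hexp
  linarith

lemma sq_mul_finrank_span_le_two_mul_log {X : Finset V} (hX : X.Nonempty) {δ : ℝ} (hδ : 0 ≤ δ) :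
    δ ^ 2 * finrank (ZMod 2) (Submodule.span (ZMod 2) {φ | δ ≤ |bias X φ|}) ≤
      2 * Real.log (Fintype.card V / #X) := by
  obtain ⟨b, hbX, hcard, -, hb⟩ :=
    Submodule.exists_finset_span_eq_linearIndepOn (ZMod 2) {φ | δ ≤ |bias X φ|}
  calc _ = ∑ _φ ∈ b, δ ^ 2 := by rw [← hcard, sum_const, nsmul_eq_mul, mul_comm]
    _ ≤ ∑ φ ∈ b, bias X φ ^ 2 :=
        sum_le_sum fun _ hφ => sq_le_sq.2 ((abs_of_nonneg hδ).trans_le (hbX hφ))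
    _ ≤ _ := sum_bias_sq_le_two_mul_log hb hX

lemma exists_submodule_walshChar_apply_eq_one {X : Finset V} (hX : X.Nonempty) {δ : ℝ}
    (hδ : 0 ≤ δ) :
    ∃ W : Submodule (ZMod 2) V,
      δ ^ 2 * ((finrank (ZMod 2) V : ℝ) - finrank (ZMod 2) W) ≤
        2 * Real.log (Fintype.card V / #X) ∧
      ∀ v ∈ W, ∀ φ, δ ≤ |bias X φ| → walshChar φ v = 1 := by
  set U := Submodule.span (ZMod 2) {φ | δ ≤ |bias X φ|}
  have hdim : (finrank (ZMod 2) V : ℝ) - finrank (ZMod 2) U.dualCoannihilator =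
      finrank (ZMod 2) U := by
    rw [← Subspace.finrank_add_finrank_dualCoannihilator_eq U, Nat.cast_add, add_sub_cancel_right]
  refine ⟨U.dualCoannihilator, ?_, fun v hv φ hφ => ?_⟩
  · rw [hdim]
    exact sq_mul_finrank_span_le_two_mul_log hX hδ
  · exact (walshChar_apply_eq_one_iff φ v).2
      ((Submodule.mem_dualCoannihilator v).1 hv φ (Submodule.subset_span hφ))

end Chang

section AlmostPeriodicity

variable {V : Type*} [AddCommGroup V] [Module (ZMod 2) V]

lemma neg_finset_eq_self_s3 [DecidableEq V] (X : Finset V) : -X = X := by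
  ext x
  rw [mem_neg', ZModModule.neg_eq_self]

variable [Fintype V] {f : V → ℝ} {B X : Finset V}

lemma l1Excess_iterate_translateAvg_le {c M : ℝ} {h : V → ℝ} (hX : X.Nonempty)
    (hM : ∀ x ∈ X, l1Excess c f (fun y => h (y + x)) ≤ M) (l : ℕ) :
    l1Excess (l * (2 * c)) f ((translateAvg X)^[2 * l] f) ≤ l * (2 * M) := by
  have hstep := l1Excess_translateAvg_translateAvg_neg_le hX hM
  rw [neg_finset_eq_self_s3] at hstep
  rw [iterate_mul]
  refine (l1Excess_iterate_le (fun c f h => ?_) (2 * c) f l).trans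
    (mul_le_mul_of_nonneg_left hstep l.cast_nonneg)
  exact (l1Excess_translateAvg_le hX ..).trans (l1Excess_translateAvg_le hX ..)

lemma sum_abs_walshCoeff_translateAvg_le_sqrt_card_div [Fintype (Dual (ZMod 2) V)]
    (hf : ∀ x, f x ∈ Set.Icc 0 1) (hfB : ∀ x ∉ B, f x = 0) (A : Finset V) :
    ∑ φ, |walshCoeff (translateAvg A f) φ| ≤ √(#B / #A) := by
  refine (sum_abs_walshCoeff_translateAvg_le A f).trans ?_
  gcongr
  calc ∑ x, f x ^ 2 = ∑ x ∈ B, f x ^ 2 :=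
        (sum_subset (subset_univ B) fun x _ hx => by rw [hfB x hx, zero_pow two_ne_zero]).symm
    _ ≤ ∑ _x ∈ B, 1 := sum_le_sum fun x _ => pow_le_one₀ (hf x).1 (hf x).2
    _ = #B := by simp

lemma card_filter_lt_abs_sub_add_le [Fintype (Dual (ZMod 2) V)] {c M : ℝ} {h : V → ℝ}
    (hX : X.Nonempty) (hM : ∀ x ∈ X, l1Excess c f (fun y => h (y + x)) ≤ M) {K : ℝ}
    (hK : ∑ φ, |walshCoeff f φ| ≤ K) {v : V}
    (hv : ∀ φ, 1 / 4 ≤ |bias X φ| → walshChar φ v = 1) {η : ℝ} (hη : 0 < η) {l : ℕ} (hl : 0 < l) :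
    (#{y | 4 * c * l + 2 * η + (2 : ℝ) ^ (-(l : ℤ)) * K < |f y - f (y + v)|} : ℝ) ≤
      2 * (l / η) * M := by
  have hpow : 2 * (1 / 4 : ℝ) ^ (2 * l) ≤ (2 : ℝ) ^ (-(l : ℤ)) := by
    rw [zpow_neg, zpow_natCast, ← inv_pow]
    calc 2 * (1 / 4 : ℝ) ^ (2 * l) = 2⁻¹ ^ l * (2 * (1 / 8) ^ l) := by
          rw [pow_mul, mul_left_comm, ← mul_pow]
          norm_num
      _ ≤ 2⁻¹ ^ l * (2 * (1 / 8) ^ 1) := by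
          gcongr ?_ * (2 * ?_)
          exact pow_le_pow_of_le_one (by norm_num) (by norm_num) hl
      _ ≤ 2⁻¹ ^ l := mul_le_of_le_one_right (by positivity) (by norm_num)
  have hperiod (y : V) : |(translateAvg X)^[2 * l] f y - (translateAvg X)^[2 * l] f (y + v)| ≤
      (2 : ℝ) ^ (-(l : ℤ)) * K :=
    (abs_iterate_translateAvg_sub_le (by norm_num) hv f (2 * l) y).trans (by gcongr)
  calc _ = (#{y | 2 * (l * (2 * c)) + (2 : ℝ) ^ (-(l : ℤ)) * K + 2 * η <
          |f y - f (y + v)|} : ℝ) := by ring_nf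
    _ ≤ 2 * l1Excess (l * (2 * c)) f ((translateAvg X)^[2 * l] f) / (2 * η) :=
        card_filter_lt_abs_sub_translate_le (by positivity) hperiod
    _ ≤ 2 * (l * (2 * M)) / (2 * η) := by
        gcongr
        exact l1Excess_iterate_translateAvg_le hX hM l
    _ = 2 * (l / η) * M := by
        field_simp

lemma log_card_div_card_le_logb {ι : Type*} [Fintype ι] {X : Finset ι} (hX : X.Nonempty) {β : ℝ}
    (hβ : 0 < β) (h : β * Fintype.card ι ≤ 2 * #X) :
    Real.log (Fintype.card ι / #X) ≤ Real.logb 2 (2 / β) := by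
  have hX' : (0 : ℝ) < #X := Nat.cast_pos.2 hX.card_pos
  have hone : (1 : ℝ) ≤ Fintype.card ι / #X :=
    (one_le_div hX').2 (Nat.cast_le.2 (card_le_univ X))
  calc Real.log (Fintype.card ι / #X) ≤ Real.logb 2 (Fintype.card ι / #X) :=
        le_div_self (Real.log_nonneg hone) (Real.log_pos one_lt_two)
          (by linarith [Real.log_two_lt_d9])
    _ ≤ Real.logb 2 (2 / β) := by
        refine Real.logb_le_logb_of_le one_lt_two (by linarith) ?_
        rw [div_le_div_iff₀ hX' hβ]
        linarith

end AlmostPeriodicity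

theorem almost_periodicity_over_subspace_general {V : Type*} [AddCommGroup V] [Module (ZMod 2) V]
    [Fintype V] [DecidableEq V] {α : ℝ} (hα : 0 < α) {A : Finset V}
    (hA : α * Fintype.card V ≤ #A) {ε : ℝ} (hε : 0 ≤ ε) {t : ℕ} (ht : 0 < t) {B : Finset V}
    (hB : B.Nonempty) {f : V → ℝ} (hf : ∀ x, f x ∈ Set.Icc 0 1) (hfB : ∀ x ∉ B, f x = 0) :
    ∃ W : Submodule (ZMod 2) V,
      (finrank (ZMod 2) V : ℝ) - finrank (ZMod 2) W ≤ 32 * Real.logb 2 (2 / α ^ t) ∧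
      ∀ v ∈ W, ∀ S : Finset V, S.Nonempty → ∀ η : ℝ, 0 < η → ∀ l : ℕ, 0 < l →
        1 - 16 * (l / η) * (#(A + B) / #S) * Real.exp (-2 * ε ^ 2 * t) ≤
          (#{y ∈ S | |translateAvg A f y - translateAvg A f (y + v)| ≤
            4 * ε * l + 2 * η + (2 : ℝ) ^ (-(l : ℤ)) * √(#B / #A)} : ℝ) / #S := by
  have hV : (0 : ℝ) < Fintype.card V := Nat.cast_pos.2 Fintype.card_pos
  have hA' : A.Nonempty := card_pos.1 (Nat.cast_pos.1 ((mul_pos hα hV).trans_le hA))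
  let _ : Fintype (Dual (ZMod 2) V) := @Fintype.ofFinite _ (finite_of_finite (ZMod 2))
  obtain ⟨h, X, hXcard, hXshift⟩ := exists_l1Excess_translateAvg_translate_le hf hfB hB hA' ht hε
  have hαX : α ^ t * Fintype.card V ≤ 2 * #X := by
    refine le_trans ?_ hXcard
    gcongr
    exact (le_div_iff₀ hV).2 hA
  have hX : X.Nonempty := by
    refine card_pos.1 (Nat.cast_pos (α := ℝ).1 ?_)
    linarith [mul_pos (pow_pos hα t) hV]
  obtain ⟨W, hW, hWchar⟩ := exists_submodule_walshChar_apply_eq_one hX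
    (by norm_num : (0 : ℝ) ≤ 1 / 4)
  refine ⟨W, by linarith [log_card_div_card_le_logb hX (pow_pos hα t) hαX], ?_⟩
  intro v hv S hS η hη l hl
  have hbad := card_filter_lt_abs_sub_add_le hX hXshift
    (sum_abs_walshCoeff_translateAvg_le_sqrt_card_div hf hfB A) (hWchar v hv) hη hl
  simp only [← not_le] at hbad
  refine le_trans ?_ (one_sub_div_le_card_filter_div_card hbad hS)
  rw [sub_eq_add_neg B, neg_finset_eq_self_s3, add_comm B]
  have hnonneg : 0 ≤ l / η * (#(A + B) / #S) * Real.exp (-2 * ε ^ 2 * t) := by positivity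
  linear_combination 8 * hnonneg

lemma rhoMeas_eq_translateAvg {n : ℕ} (A B : Finset (Fin n → ZMod 2)) :
    rhoMeas A B = translateAvg A fun y => if y ∈ B then 1 else 0 := by
  funext y
  rw [rhoMeas, translateAvg, expect_eq_sum_div_card, sum_boole]

theorem almost_periodicity_over_subspace {n : ℕ} (α : ℝ) (hα0 : 0 < α) (hα1 : α ≤ 1)
    (A : Finset (Fin n → ZMod 2)) (hA : α * 2 ^ n ≤ (A.card : ℝ))
    (ε : ℝ) (hε : 0 < ε) (t : ℕ) (ht : 0 < t)
    (B : Finset (Fin n → ZMod 2)) (hB : B.Nonempty) :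
    ∃ V : Submodule (ZMod 2) (Fin n → ZMod 2),
      (n : ℝ) - Module.finrank (ZMod 2) V ≤ 32 * Real.logb 2 (2 / α ^ t) ∧
      ∀ v ∈ V, ∀ S : Finset (Fin n → ZMod 2), S.Nonempty →
        ∀ η : ℝ, 0 < η → ∀ ℓ : ℕ, 0 < ℓ →
          1 - 16 * ((ℓ : ℝ) / η) * (((A + B).card : ℝ) / S.card) *
              Real.exp (-2 * ε ^ 2 * t) ≤
            prOver S (fun y =>
              |rhoMeas A B y - rhoMeas A B (y + v)| ≤
                4 * ε * ℓ + 2 * η +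
                  (2 : ℝ) ^ (-(ℓ : ℤ)) * Real.sqrt ((B.card : ℝ) / A.card)) := by
  obtain ⟨V, hcodim, hV⟩ := almost_periodicity_over_subspace_general hα0 (by simpa using hA) hε.le
    ht hB (f := fun y => if y ∈ B then 1 else 0) (fun x => by split_ifs <;> simp)
    fun x hx => if_neg hx
  rw [Module.finrank_fin_fun] at hcodim
  rw [← rhoMeas_eq_translateAvg] at hV
  exact ⟨V, hcodim, hV⟩
end

section
/- Let ε, δ > 0, let ℓ be a positive integer, and let A, B, X, S ⊆ F_2^n with A, X, S nonempty, be such that for all x₁, …, x_ℓ ∈ X, Pr_{y∈S}[ |ρ_{A→B}(y) − ρ_{A→B}(y + x₁ + ⋯ + x_ℓ)| ≤ ε ] ≥ 1 − δ. Then for every η > 0, Pr_{y∈S}[ |ρ_{A→B}(y) − E_{x₁,…,x_ℓ∈X}[ρ_{A→B}(y + x₁ + ⋯ + x_ℓ)]| ≤ ε + η ] ≥ 1 − δ/η, where the expectation is over x₁, …, x_ℓ drawn independently and uniformly from X. -/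
open scoped Classical

/-- Expectation of `F(x₁, …, x_ℓ)` over `x₁, …, x_ℓ` drawn independently and
uniformly from `X`. -/
noncomputable def expTuples {n : ℕ} (X : Finset (Fin n → ZMod 2)) (ℓ : ℕ)
    (F : (Fin ℓ → (Fin n → ZMod 2)) → ℝ) : ℝ :=
  (∑ x ∈ Fintype.piFinset fun _ : Fin ℓ => X, F x) / (X.card : ℝ) ^ ℓ

/-!
Write `f` for `ρ` and, for a tuple of shifts `t`, write `g t` for `ρ` translated by the sum of `t`.
Call `t` bad for `y` if `f y` and `g t y` differ by more than `ε`. Since they never differ by more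
than `1`, the deviation of `f y` from the average of `g t y` over `t` is at most `ε` plus the
fraction of `t` that are bad for `y`. Each `t` is bad for at most a `δ` fraction of the `y`, so
exchanging the two averages shows that the fraction of bad `t` has mean at most `δ` over `y`, and
Markov's inequality bounds how often it exceeds `η`.
-/

section UniformProbability

open Finset
open scoped BigOperators

variable {α β : Type*} {S : Finset α} {T : Finset β}

/-- The probability that a uniformly random element of `S` satisfies `P`; this is `prOver` over an
arbitrary type. It is `0` when `S` is empty. -/
noncomputable def uniformProb (S : Finset α) (P : α → Prop) : ℝ :=
  #{y ∈ S | P y} / #S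

theorem uniformProb_eq_expect (S : Finset α) (P : α → Prop) [DecidablePred P] :
    uniformProb S P = 𝔼 y ∈ S, if P y then (1 : ℝ) else 0 := by
  rw [uniformProb, expect_eq_sum_div_card, sum_boole]
  congr!

theorem uniformProb_nonneg (S : Finset α) (P : α → Prop) : 0 ≤ uniformProb S P := by
  rw [uniformProb]
  positivity

theorem uniformProb_add_uniformProb_not (hS : S.Nonempty) (P : α → Prop) :
    uniformProb S P + uniformProb S (fun y => ¬P y) = 1 := by
  have hcard : (#S : ℝ) ≠ 0 := Nat.cast_ne_zero.2 hS.card_ne_zero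
  rw [uniformProb, uniformProb, ← add_div, ← Nat.cast_add, card_filter_add_card_filter_not,
    div_self hcard]

theorem one_sub_le_uniformProb_iff (hS : S.Nonempty) {P : α → Prop} {δ : ℝ} :
    1 - δ ≤ uniformProb S P ↔ uniformProb S (fun y => ¬P y) ≤ δ := by
  rw [← uniformProb_add_uniformProb_not hS P, sub_le_iff_le_add, add_le_add_iff_left]

theorem expect_uniformProb_comm (S : Finset α) (T : Finset β) (R : α → β → Prop) :
    𝔼 y ∈ S, uniformProb T (fun t => R y t) = 𝔼 t ∈ T, uniformProb S (fun y => R y t) := by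
  simp only [uniformProb_eq_expect]
  exact expect_comm S T _

theorem mul_uniformProb_le_expect {P : α → Prop} {f : α → ℝ} {η : ℝ} (hf : ∀ y ∈ S, 0 ≤ f y)
    (hP : ∀ y ∈ S, P y → η ≤ f y) : η * uniformProb S P ≤ 𝔼 y ∈ S, f y := by
  rw [uniformProb_eq_expect, mul_expect]
  refine expect_le_expect fun y hy => ?_
  split_ifs with h
  · simpa only [mul_one] using hP y hy h
  · simpa only [mul_zero] using hf y hy

theorem abs_sub_expect_le_add_uniformProb (hT : T.Nonempty) {a ε : ℝ} {g : β → ℝ} (hε : 0 ≤ ε)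
    (hg : ∀ t ∈ T, |a - g t| ≤ 1) :
    |a - 𝔼 t ∈ T, g t| ≤ ε + uniformProb T (fun t => ¬|a - g t| ≤ ε) := by
  have pointwise : ∀ t ∈ T, |a - g t| ≤ ε + if ¬|a - g t| ≤ ε then 1 else 0 := by
    intro t ht
    split_ifs with h
    · rwa [add_zero]
    · exact (hg t ht).trans (le_add_of_nonneg_left hε)
  calc |a - 𝔼 t ∈ T, g t| = |𝔼 t ∈ T, (a - g t)| := by
        rw [expect_sub_distrib, expect_const hT]
    _ ≤ 𝔼 t ∈ T, |a - g t| := abs_expect_le T _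
    _ ≤ 𝔼 t ∈ T, (ε + if ¬|a - g t| ≤ ε then 1 else 0) := expect_le_expect pointwise
    _ = ε + uniformProb T (fun t => ¬|a - g t| ≤ ε) := by
        rw [expect_add_distrib, expect_const hT, uniformProb_eq_expect]

theorem subspace_averaging_general (hS : S.Nonempty) (hT : T.Nonempty) {f : α → ℝ}
    {g : β → α → ℝ} {ε δ η : ℝ} (hε : 0 ≤ ε) (hη : 0 < η)
    (hfg : ∀ y ∈ S, ∀ t ∈ T, |f y - g t y| ≤ 1)
    (hclose : ∀ t ∈ T, 1 - δ ≤ uniformProb S (fun y => |f y - g t y| ≤ ε)) :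
    1 - δ / η ≤ uniformProb S (fun y => |f y - 𝔼 t ∈ T, g t y| ≤ ε + η) := by
  have deviation_imp : ∀ y ∈ S, ¬|f y - 𝔼 t ∈ T, g t y| ≤ ε + η →
      η ≤ uniformProb T (fun t => ¬|f y - g t y| ≤ ε) := by
    intro y hy hdev
    have := abs_sub_expect_le_add_uniformProb hT hε (hfg y hy)
    linarith
  rw [one_sub_le_uniformProb_iff hS, le_div_iff₀' hη]
  calc η * uniformProb S (fun y => ¬|f y - 𝔼 t ∈ T, g t y| ≤ ε + η)
      ≤ 𝔼 y ∈ S, uniformProb T (fun t => ¬|f y - g t y| ≤ ε) :=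
        mul_uniformProb_le_expect (fun _ _ => uniformProb_nonneg T _) deviation_imp
    _ = 𝔼 t ∈ T, uniformProb S (fun y => ¬|f y - g t y| ≤ ε) := expect_uniformProb_comm S T _
    _ ≤ δ := expect_le hT fun t ht => (one_sub_le_uniformProb_iff hS).1 (hclose t ht)

end UniformProbability

section AdditiveContainment

open scoped BigOperators

variable {n : ℕ}

theorem prOver_eq_uniformProb (S : Finset (Fin n → ZMod 2)) (P : (Fin n → ZMod 2) → Prop) :
    prOver S P = uniformProb S P :=
  rfl

theorem expTuples_eq_expect (X : Finset (Fin n → ZMod 2)) (ℓ : ℕ)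
    (F : (Fin ℓ → (Fin n → ZMod 2)) → ℝ) :
    expTuples X ℓ F = 𝔼 x ∈ Fintype.piFinset fun _ : Fin ℓ => X, F x := by
  rw [expTuples, Finset.expect_eq_sum_div_card, Fintype.card_piFinset_const, Nat.cast_pow]

theorem rhoMeas_nonneg (A B : Finset (Fin n → ZMod 2)) (y : Fin n → ZMod 2) :
    0 ≤ rhoMeas A B y := by
  rw [rhoMeas]
  positivity

theorem rhoMeas_le_one (A B : Finset (Fin n → ZMod 2)) (y : Fin n → ZMod 2) :
    rhoMeas A B y ≤ 1 :=
  div_le_one_of_le₀ (Nat.cast_le.2 (Finset.card_filter_le _ _)) (Nat.cast_nonneg _)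

theorem abs_rhoMeas_sub_rhoMeas_le_one (A B : Finset (Fin n → ZMod 2)) (y z : Fin n → ZMod 2) :
    |rhoMeas A B y - rhoMeas A B z| ≤ 1 :=
  abs_sub_le_of_nonneg_of_le (rhoMeas_nonneg A B y) (rhoMeas_le_one A B y)
    (rhoMeas_nonneg A B z) (rhoMeas_le_one A B z)

end AdditiveContainment

theorem subspace_averaging {n : ℕ} (ε δ : ℝ) (hε : 0 < ε) (hδ : 0 < δ)
    (ℓ : ℕ) (hℓ : 0 < ℓ)
    (A B X S : Finset (Fin n → ZMod 2)) (hA : A.Nonempty) (hX : X.Nonempty)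
    (hS : S.Nonempty)
    (hyp : ∀ x : Fin ℓ → (Fin n → ZMod 2), (∀ i, x i ∈ X) →
      1 - δ ≤ prOver S (fun y => |rhoMeas A B y - rhoMeas A B (y + ∑ i, x i)| ≤ ε)) :
    ∀ η : ℝ, 0 < η →
      1 - δ / η ≤ prOver S (fun y =>
        |rhoMeas A B y -
            expTuples X ℓ (fun x => rhoMeas A B (y + ∑ i, x i))| ≤ ε + η) := by
  intro η hη
  simp only [prOver_eq_uniformProb, expTuples_eq_expect] at hyp ⊢
  exact subspace_averaging_general hS (Fintype.piFinset_nonempty.2 fun _ => hX) hε.le hη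
    (fun y _ x _ => abs_rhoMeas_sub_rhoMeas_le_one A B y (y + ∑ i, x i))
    fun x hx => hyp x (Fintype.mem_piFinset.1 hx)
end
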